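/- arXiv:2209.15607 — 3 statements merged into one kernel-verified Lean document; each statement's English description precedes it below -/
import Mathlib

section
/- Let μ be a centered, compactly supported Borel probability measure on ℝ that is not a Dirac mass. Then there exists a finite Borel measure μ̂ on ℝ such that for every ω ∈ ℂ⁺ one has F_μ(ω) − ω = ∫_ℝ (x − ω)⁻¹ dμ̂(x), and moreover μ̂(ℝ) = ∫_ℝ x² dμ(x), which is strictly positive and finite. -/
open MeasureTheory Complex Set Filter Topology

noncomputable section

/-- Cauchy–Stieltjes transform `m_μ(z) = ∫ (x − z)⁻¹ dμ(x)`. -/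
def mTr (μ : Measure ℝ) (z : ℂ) : ℂ := ∫ x, ((x : ℂ) - z)⁻¹ ∂μ

/-- Negative reciprocal Cauchy–Stieltjes transform `F_μ(z) = −1/m_μ(z)`. -/
def FTr (μ : Measure ℝ) (z : ℂ) : ℂ := -(mTr μ z)⁻¹

/-- `I_ν(ω) = ∫ |x − ω|⁻² dν(x)`. -/
def Inu (ν : Measure ℝ) (ω : ℂ) : ℝ := ∫ x, (Complex.normSq ((x : ℂ) - ω))⁻¹ ∂ν

/-- Topological support of a Borel measure on ℝ. -/
def msupport (μ : Measure ℝ) : Set ℝ := {x | ∀ U : Set ℝ, IsOpen U → x ∈ U → 0 < μ U}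

/-- `μh` is a Nevanlinna measure for the (centered) measure `μ`:
a finite Borel measure with `F_μ(ω) − ω = ∫ (x − ω)⁻¹ dμh(x)` on ℂ⁺. -/
def IsNevanlinna (μ μh : Measure ℝ) : Prop :=
  IsFiniteMeasure μh ∧ ∀ ω : ℂ, 0 < ω.im → FTr μ ω - ω = ∫ x, ((x : ℂ) - ω)⁻¹ ∂μh

/-- Subordination function for `μ` at time `t`. -/
structure IsSubordination (μ : Measure ℝ) (t : ℝ) (ω : ℂ → ℂ) : Prop where
  contOn : ContinuousOn ω {z : ℂ | 0 ≤ z.im}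
  mapsTo : ∀ z : ℂ, 0 ≤ z.im → 0 ≤ (ω z).im
  diff : DifferentiableOn ℂ ω {z : ℂ | 0 < z.im}
  im_ge : ∀ z : ℂ, 0 < z.im → z.im ≤ (ω z).im
  subord : ∀ z : ℂ, 0 < z.im → (t : ℂ) * ω z - z = ((t - 1 : ℝ) : ℂ) * FTr μ (ω z)

/-- `ν = μ^{⊞t}`, the free convolution power associated with the subordination function `ω`. -/
def IsFreePower (μ : Measure ℝ) (t : ℝ) (ω : ℂ → ℂ) (ν : Measure ℝ) : Prop :=
  IsProbabilityMeasure ν ∧ ∀ z : ℂ, 0 < z.im → mTr ν z = mTr μ (ω z)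

/-- Subordination functions for the pair `(μa, μb)`. -/
structure IsPairSubordination (μa μb : Measure ℝ) (ωa ωb : ℂ → ℂ) : Prop where
  diff_a : DifferentiableOn ℂ ωa {z : ℂ | 0 < z.im}
  diff_b : DifferentiableOn ℂ ωb {z : ℂ | 0 < z.im}
  im_a : ∀ z : ℂ, 0 < z.im → z.im ≤ (ωa z).im
  im_b : ∀ z : ℂ, 0 < z.im → z.im ≤ (ωb z).im
  lim_a : Tendsto (fun η : ℝ => ωa (η * Complex.I) / (η * Complex.I)) atTop (nhds 1)
  lim_b : Tendsto (fun η : ℝ => ωb (η * Complex.I) / (η * Complex.I)) atTop (nhds 1)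
  eq_a : ∀ z : ℂ, 0 < z.im → ωa z + ωb z - z = FTr μa (ωb z)
  eq_b : ∀ z : ℂ, 0 < z.im → ωa z + ωb z - z = FTr μb (ωa z)

/-- `ν = μa ⊞ μb`, the free additive convolution. -/
def IsFreeConv (μa μb : Measure ℝ) (ωb : ℂ → ℂ) (ν : Measure ℝ) : Prop :=
  IsProbabilityMeasure ν ∧ ∀ z : ℂ, 0 < z.im → mTr ν z = mTr μa (ωb z)

/-- Assumption 1 of the paper: `μ` is a centered, compactly supported probability
measure whose singular part consists of finitely many atoms and whose absolutely
continuous part has a density `ρ` of Jacobi type, supported on finitely many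
disjoint compact intervals with power-law behavior (exponents in `(−1,1)`). -/
structure JacobiData (μ : Measure ℝ) where
  ρ : ℝ → ℝ
  n : ℕ
  npos : 0 < n
  Em : Fin n → ℝ
  Ep : Fin n → ℝ
  βm : Fin n → ℝ
  βp : Fin n → ℝ
  Cj : Fin n → ℝ
  atoms : Finset ℝ
  w : ℝ → ℝ
  prob : IsProbabilityMeasure μ
  compactSupp : ∃ K : Set ℝ, IsCompact K ∧ μ Kᶜ = 0
  centered : ∫ x, x ∂μ = 0
  lt : ∀ j, Em j < Ep j
  disj : ∀ i j, i ≠ j → Disjoint (Set.Icc (Em i) (Ep i)) (Set.Icc (Em j) (Ep j))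
  βm_mem : ∀ j, βm j ∈ Set.Ioo (-1 : ℝ) 1
  βp_mem : ∀ j, βp j ∈ Set.Ioo (-1 : ℝ) 1
  Cj_ge : ∀ j, 1 ≤ Cj j
  ρ_nonneg : ∀ x, 0 ≤ ρ x
  ρ_supp : ∀ x, x ∉ ⋃ j, Set.Icc (Em j) (Ep j) → ρ x = 0
  powerLaw : ∀ j, ∀ᵐ E ∂(volume.restrict (Set.Icc (Em j) (Ep j))),
      (Cj j)⁻¹ * ((E - Em j) ^ (βm j) * (Ep j - E) ^ (βp j)) ≤ ρ E ∧
      ρ E ≤ Cj j * ((E - Em j) ^ (βm j) * (Ep j - E) ^ (βp j))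
  w_nonneg : ∀ a, 0 ≤ w a
  decomp : μ = volume.withDensity (fun x => ENNReal.ofReal (ρ x))
      + ∑ a ∈ atoms, ENNReal.ofReal (w a) • Measure.dirac a

/-- The support of the absolutely continuous part of `μ`. -/
def JacobiData.acSupport {μ : Measure ℝ} (d : JacobiData μ) : Set ℝ :=
  ⋃ j, Set.Icc (d.Em j) (d.Ep j)

/-- The Hölder condition (5.1)/(2.8) of the paper on the density of `μ_ac`. -/
def JacobiData.HolderCond {μ : Measure ℝ} (d : JacobiData μ) : Prop :=
  ∀ j, ∃ L γ : NNReal, 0 < γ ∧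
    HolderOnWith L γ
      (fun E => d.ρ E / ((E - d.Em j) ^ (d.βm j) * (d.Ep j - E) ^ (d.βp j)))
      (Set.Icc (d.Em j) (d.Ep j))

/-- Assumption 2 of the paper: a centered, absolutely continuous probability measure
supported on finitely many disjoint compact intervals, with density of Jacobi type. -/
structure AbsJacobiData (μ : Measure ℝ) where
  ρ : ℝ → ℝ
  n : ℕ
  npos : 0 < n
  Am : Fin n → ℝ
  Ap : Fin n → ℝ
  sm : Fin n → ℝ
  sp : Fin n → ℝ
  Cj : Fin n → ℝ
  prob : IsProbabilityMeasure μ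
  centered : ∫ x, x ∂μ = 0
  lt : ∀ j, Am j < Ap j
  disj : ∀ i j, i ≠ j → Disjoint (Set.Icc (Am i) (Ap i)) (Set.Icc (Am j) (Ap j))
  sm_mem : ∀ j, sm j ∈ Set.Ioo (-1 : ℝ) 1
  sp_mem : ∀ j, sp j ∈ Set.Ioo (-1 : ℝ) 1
  Cj_ge : ∀ j, 1 ≤ Cj j
  ρ_nonneg : ∀ x, 0 ≤ ρ x
  ρ_supp : ∀ x, x ∉ ⋃ j, Set.Icc (Am j) (Ap j) → ρ x = 0
  powerLaw : ∀ j, ∀ᵐ E ∂(volume.restrict (Set.Icc (Am j) (Ap j))),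
      (Cj j)⁻¹ * ((E - Am j) ^ (sm j) * (Ap j - E) ^ (sp j)) ≤ ρ E ∧
      ρ E ≤ Cj j * ((E - Am j) ^ (sm j) * (Ap j - E) ^ (sp j))
  decomp : μ = volume.withDensity (fun x => ENNReal.ofReal (ρ x))


open scoped CompactlySupported

lemma spectral_measure_exists {H : Type*} [NormedAddCommGroup H] [InnerProductSpace ℂ H]
    [CompleteSpace H] (A : H →L[ℂ] H) (hA : IsSelfAdjoint A) (b : H) :
    ∃ ν : Measure ℝ, IsFiniteMeasure ν ∧ ∀ f : ℝ → ℝ, Continuous f →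
      Integrable f ν ∧ ((∫ x, f x ∂ν : ℝ) : ℂ) = inner ℂ b (cfc f A b) := by
  let S := spectrum ℝ A
  let φ := cfcHom (R := ℝ) (a := A) hA
  let L : C_c(S, ℝ) →ₗ[ℝ] ℝ :=
    { toFun := fun f => (inner ℂ b (φ f.toContinuousMap b)).re
      map_add' := fun f g => by
        have : (f + g).toContinuousMap = f.toContinuousMap + g.toContinuousMap := rfl
        rw [this, map_add]
        simp
      map_smul' := fun c f => by
        have : (c • f).toContinuousMap = c • f.toContinuousMap := rfl
        rw [this, map_smul]
        have h2 : (c • φ f.toContinuousMap) b = (c : ℂ) • (φ f.toContinuousMap b) := by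
          simp
        rw [h2, inner_smul_right]
        simp }
  let Λ : C_c(S, ℝ) →ₚ[ℝ] ℝ := PositiveLinearMap.mk₀ L (by
    intro f hf
    have h1 : 0 ≤ φ f.toContinuousMap := by
      rw [cfcHom_nonneg_iff]
      exact hf
    have := (ContinuousLinearMap.nonneg_iff_isPositive _).1 h1
    exact this.re_inner_nonneg_right b)
  let ν := RealRMK.rieszMeasure Λ
  have hreg : IsFiniteMeasure ν := by
    constructor
    refine lt_of_le_of_lt (RealRMK.rieszMeasure_le_of_eq_one Λ
      (f := CompactlySupportedContinuousMap.continuousMapEquiv (1 : C(S, ℝ))) ?_ isCompact_univ ?_) ENNReal.ofReal_lt_top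
    · intro x; simp
    · intro x _; simp
  have hemb : MeasurableEmbedding (Subtype.val : S → ℝ) :=
    MeasurableEmbedding.subtype_coe (spectrum.isClosed A).measurableSet
  refine ⟨ν.map Subtype.val, inferInstance, fun f hf => ⟨?_, ?_⟩⟩
  · rw [hemb.integrable_map_iff]
    exact (hf.comp continuous_subtype_val).integrable_of_hasCompactSupport
      (HasCompactSupport.of_compactSpace _)
  · rw [hemb.integral_map]
    have := RealRMK.integral_rieszMeasure Λ (CompactlySupportedContinuousMap.continuousMapEquiv (⟨fun x : S => f x, hf.comp continuous_subtype_val⟩ : C(S, ℝ)))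
    have h3 : ∫ x : S, f x ∂ν = (inner ℂ b (cfc f A b)).re := by
      rw [cfc_apply f A hA hf.continuousOn]
      exact this
    rw [h3]
    apply Complex.ext
    · simp
    · have hs : IsSelfAdjoint (cfc f A) := cfc_predicate f A
      have := hs.isSymmetric.im_inner_self_apply b
      simpa using this.symm

lemma resolvent_measure {H : Type*} [NormedAddCommGroup H] [InnerProductSpace ℂ H]
    [CompleteSpace H] (A : H →L[ℂ] H) (hA : IsSelfAdjoint A) (b : H) :
    ∃ ν : Measure ℝ, IsFiniteMeasure ν ∧ (ν Set.univ).toReal = ‖b‖ ^ 2 ∧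
      ∀ ω : ℂ, 0 < ω.im → ∃ u : H, A u - ω • u = b ∧
        ∫ x, ((x : ℂ) - ω)⁻¹ ∂ν = inner ℂ b u := by
  obtain ⟨ν, hν, h⟩ := spectral_measure_exists A hA b
  refine ⟨ν, hν, ?_, ?_⟩
  · have := (h (fun _ => 1) continuous_const).2
    rw [cfc_const_one ℝ A] at this
    simp only [integral_const, smul_eq_mul, mul_one, one_apply_eq_self] at this
    rw [inner_self_eq_norm_sq_to_K] at this
    exact Complex.ofReal_injective (by simpa [Measure.real] using this)
  · intro ω hω
    let d : ℝ → ℝ := fun x => (x - ω.re) ^ 2 + ω.im ^ 2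
    have hd : ∀ x, d x ≠ 0 := fun x => by positivity
    have hdc : Continuous d := by fun_prop
    let f : ℝ → ℝ := fun x => (x - ω.re) / d x
    let g : ℝ → ℝ := fun x => ω.im / d x
    have hf : Continuous f := Continuous.div (by fun_prop) hdc hd
    have hg : Continuous g := Continuous.div (by fun_prop) hdc hd
    have hfs : ∀ c : ℝ, Continuous (fun x => c • f x) := fun c => hf.const_smul c
    have hgs : ∀ c : ℝ, Continuous (fun x => c • g x) := fun c => hg.const_smul c
    have e1 : cfc (fun x : ℝ => x * f x) A = A * cfc f A := by
      rw [cfc_mul (fun x : ℝ => x) f A continuous_id.continuousOn hf.continuousOn, cfc_id' ℝ A]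
    have e2 : cfc (fun x : ℝ => x * g x) A = A * cfc g A := by
      rw [cfc_mul (fun x : ℝ => x) g A continuous_id.continuousOn hg.continuousOn, cfc_id' ℝ A]
    have e3 : A * cfc f A = 1 + ω.re • cfc f A - ω.im • cfc g A := by
      rw [← e1, ← cfc_smul ω.re f A hf.continuousOn, ← cfc_smul ω.im g A hg.continuousOn,
        ← cfc_const_one ℝ A,
        ← cfc_add (a := A) (fun _ => 1) (fun x => ω.re • f x) continuous_const.continuousOn (hfs _).continuousOn,
        ← cfc_sub (a := A) (fun x => 1 + ω.re • f x) (fun x => ω.im • g x)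
          (continuous_const.add (hfs _)).continuousOn (hgs _).continuousOn]
      congr 1
      funext x
      have := hd x
      simp only [f, g, smul_eq_mul]
      field_simp
      simp only [d]; ring
    have e4 : A * cfc g A = ω.re • cfc g A + ω.im • cfc f A := by
      rw [← e2, ← cfc_smul ω.re g A hg.continuousOn, ← cfc_smul ω.im f A hf.continuousOn,
        ← cfc_add (a := A) _ _ (hgs _).continuousOn (hfs _).continuousOn]
      congr 1
      funext x
      have := hd x
      simp only [f, g, smul_eq_mul]
      field_simp
      ring
    refine ⟨cfc f A b + I • cfc g A b, ?_, ?_⟩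
    · have e3' : A (cfc f A b) = b + (ω.re : ℂ) • cfc f A b - (ω.im : ℂ) • cfc g A b := by
        simpa using congrArg (fun T : H →L[ℂ] H => T b) e3
      have e4' : A (cfc g A b) = (ω.re : ℂ) • cfc g A b + (ω.im : ℂ) • cfc f A b := by
        simpa using congrArg (fun T : H →L[ℂ] H => T b) e4
      rw [map_add, map_smul, e3', e4']
      nth_rewrite 5 [← re_add_im ω]
      match_scalars <;> ring_nf <;> simp [Complex.I_sq]
    · rw [inner_add_right, inner_smul_right, ← (h f hf).2, ← (h g hg).2,
        ← integral_complex_ofReal, ← integral_complex_ofReal, ← integral_const_mul,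
        ← integral_add (h f hf).1.ofReal ((h g hg).1.ofReal.const_mul _)]
      congr 1
      funext x
      have h1 : (x : ℂ) - ω ≠ 0 := by
        intro h0
        have := congrArg Complex.im h0
        simp at this
        exact hω.ne' this
      have h2 : ((d x : ℝ) : ℂ) ≠ 0 := by exact_mod_cast hd x
      simp only [f, g]
      push_cast
      field_simp
      simp only [d]
      push_cast
      have : ω = ω.re + ω.im * I := (re_add_im ω).symm
      generalize ω.re = p at *
      generalize ω.im = q at *
      subst this
      ring_nf
      simp [Complex.I_sq]

lemma compression_measure {H : Type*} [NormedAddCommGroup H] [InnerProductSpace ℂ H]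
    [CompleteSpace H] (X : H →L[ℂ] H) (hX : IsSelfAdjoint X) (e : H) (he : ‖e‖ = 1)
    (h0 : inner ℂ e (X e) = 0) :
    ∃ ν : Measure ℝ, IsFiniteMeasure ν ∧ (ν Set.univ).toReal = ‖X e‖ ^ 2 ∧
      ∀ ω : ℂ, 0 < ω.im → ∃ u : H, inner ℂ e u = 0 ∧
        X u - ω • u = X e + (∫ x, ((x : ℂ) - ω)⁻¹ ∂ν) • e := by
  let U : Submodule ℂ H := (ℂ ∙ e)ᗮ
  have hP : ∀ x, U.starProjection x = x - (inner ℂ e x : ℂ) • e := by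
    intro x
    rw [Submodule.starProjection_orthogonal_val, Submodule.starProjection_unit_singleton _ he]
  have hsymm : ∀ x, inner ℂ e (X x) = inner ℂ (X e) x := fun x => (hX.isSymmetric e x).symm
  have hee : inner ℂ e e = (1 : ℂ) := by
    rw [inner_self_eq_norm_sq_to_K, he]; simp
  obtain ⟨ν, hν, hm, h⟩ := resolvent_measure _ (hX.conj_starProjection U) (X e)
  refine ⟨ν, hν, hm, fun ω hω => ?_⟩
  obtain ⟨u, hu, hc⟩ := h ω hω
  have hω0 : ω ≠ 0 := by rintro rfl; simp at hω
  simp only [ContinuousLinearMap.comp_apply] at hu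
  rw [hP (X _)] at hu
  have h1 : inner ℂ e u = (0 : ℂ) := by
    have := congrArg (fun v => inner ℂ e v) hu
    simp only [inner_sub_right, inner_smul_right, hee, h0] at this
    simpa [hω0] using this
  refine ⟨u, h1, ?_⟩
  have h2 : U.starProjection u = u := by rw [hP, h1]; simp
  rw [h2, hsymm, ← hc] at hu
  rw [← hu]
  abel

/-- existence of the Nevanlinna measure `μ̂` with total mass the second
moment of `μ`, which is strictly positive and finite. -/
theorem statement0 (μ : Measure ℝ) (hprob : IsProbabilityMeasure μ)
    (hcpt : ∃ K : Set ℝ, IsCompact K ∧ μ Kᶜ = 0)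
    (hcent : ∫ x, x ∂μ = 0)
    (hnd : ∀ a : ℝ, μ ≠ Measure.dirac a) :
    ∃ μh : Measure ℝ, IsFiniteMeasure μh ∧
      (∀ ω : ℂ, 0 < ω.im → FTr μ ω - ω = ∫ x, ((x : ℂ) - ω)⁻¹ ∂μh) ∧
      (μh Set.univ).toReal = ∫ x, x ^ 2 ∂μ ∧
      0 < ∫ x, x ^ 2 ∂μ := by
  obtain ⟨K, hK, hK0⟩ := hcpt
  obtain ⟨C, hC⟩ := hK.isBounded.exists_norm_le
  have hbd : ∀ᵐ x ∂μ, ‖x‖ ≤ C := by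
    have : ∀ᵐ x ∂μ, x ∈ K := by
      rw [ae_iff]; exact hK0
    filter_upwards [this] with x hx using hC x hx
  have hsq : Integrable (fun x : ℝ => x ^ 2) μ := by
    refine Integrable.of_bound (C := C ^ 2) (by fun_prop) ?_
    filter_upwards [hbd] with x hx
    rw [norm_pow]
    gcongr
  have hxtop : MemLp (fun x : ℝ => (x : ℂ)) ⊤ μ := by
    refine memLp_top_of_bound (by fun_prop) C ?_
    filter_upwards [hbd] with x hx
    simpa using hx
  let gI : Lp ℂ ⊤ μ := hxtop.toLp
  have hgI : gI =ᵐ[μ] fun x : ℝ => (x : ℂ) := hxtop.coeFn_toLp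
  let X : Lp ℂ 2 μ →L[ℂ] Lp ℂ 2 μ := (ContinuousLinearMap.mul ℂ ℂ).holderL μ ⊤ 2 2 gI
  have hXa : ∀ f : Lp ℂ 2 μ, X f =ᵐ[μ] fun x : ℝ => (x : ℂ) * f x := by
    intro f
    have h1 : X f =ᵐ[μ] fun x => (ContinuousLinearMap.mul ℂ ℂ) (gI x) (f x) :=
      (ContinuousLinearMap.mul ℂ ℂ).coeFn_holder (r := 2) gI f
    filter_upwards [h1, hgI] with x h1 h2
    rw [h1, h2]; rfl
  have hX : IsSelfAdjoint X := by
    rw [ContinuousLinearMap.isSelfAdjoint_iff_isSymmetric]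
    intro f g
    change inner ℂ (X f) g = inner ℂ f (X g)
    rw [L2.inner_def, L2.inner_def]
    apply integral_congr_ae
    filter_upwards [hXa f, hXa g] with x h1 h2
    rw [h1, h2]
    simp
    ring
  let e : Lp ℂ 2 μ := (memLp_const (1 : ℂ)).toLp
  have hea : e =ᵐ[μ] fun _ => (1 : ℂ) := (memLp_const (1 : ℂ)).coeFn_toLp
  have hie : ∀ f : Lp ℂ 2 μ, inner ℂ e f = ∫ x, f x ∂μ := by
    intro f
    rw [L2.inner_def]
    apply integral_congr_ae
    filter_upwards [hea] with x h1
    rw [h1]; simp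
  have hXe : X e =ᵐ[μ] fun x : ℝ => (x : ℂ) := by
    filter_upwards [hXa e, hea] with x h1 h2
    rw [h1, h2, mul_one]
  have he : ‖e‖ = 1 := by
    have h1 : inner ℂ e e = (1 : ℂ) := by
      rw [hie, integral_congr_ae hea]; simp
    rw [inner_self_eq_norm_sq_to_K] at h1
    have h2 : ‖e‖ ^ 2 = 1 := Complex.ofReal_injective (by simpa using h1)
    nlinarith [norm_nonneg e]
  have h0 : inner ℂ e (X e) = 0 := by
    rw [hie, integral_congr_ae hXe, integral_complex_ofReal, hcent]; simp
  have hnorm : ‖X e‖ ^ 2 = ∫ x, x ^ 2 ∂μ := by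
    have h1 : inner ℂ (X e) (X e) = ((∫ x, x ^ 2 ∂μ : ℝ) : ℂ) := by
      rw [L2.inner_def, ← integral_complex_ofReal]
      apply integral_congr_ae
      filter_upwards [hXe] with x h1
      rw [h1, RCLike.inner_apply, Complex.conj_ofReal]
      push_cast
      ring
    rw [inner_self_eq_norm_sq_to_K] at h1
    exact Complex.ofReal_injective (by simpa using h1)
  obtain ⟨ν, hν, hm, h⟩ := compression_measure X hX e he h0
  refine ⟨ν, hν, ?_, hm.trans hnorm, ?_⟩
  · intro ω hω
    obtain ⟨u, hu0, hu⟩ := h ω hω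
    generalize (∫ x, ((x : ℂ) - ω)⁻¹ ∂ν) = c at hu ⊢
    have hne : ∀ x : ℝ, (x : ℂ) - ω ≠ 0 := by
      intro x h0
      have := congrArg Complex.im h0
      simp at this
      exact hω.ne' this
    have hua : u =ᵐ[μ] fun x : ℝ => 1 + (ω + c) * ((x : ℂ) - ω)⁻¹ := by
      have h1 : (X u - ω • u : Lp ℂ 2 μ) =ᵐ[μ] (X e + c • e : Lp ℂ 2 μ) := by rw [hu]
      filter_upwards [h1, Lp.coeFn_sub (X u) (ω • u), Lp.coeFn_add (X e) (c • e),
        Lp.coeFn_smul ω u, Lp.coeFn_smul c e, hXa u, hXe, hea] with x h1 h2 h3 h4 h5 h6 h7 h8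
      rw [h2, h3] at h1
      simp only [Pi.sub_apply, Pi.add_apply, h4, h5, Pi.smul_apply, h6, h7, h8, smul_eq_mul] at h1
      have := hne x
      field_simp
      linear_combination h1
    have hint : Integrable (fun x : ℝ => ((x : ℂ) - ω)⁻¹) μ := by
      refine Integrable.of_bound (C := ω.im⁻¹) ?_ (Eventually.of_forall fun x => ?_)
      · exact (Measurable.inv (by fun_prop)).aestronglyMeasurable
      · rw [norm_inv]
        gcongr
        have := Complex.abs_im_le_norm ((x : ℂ) - ω)
        simpa [abs_of_pos hω] using this
    rw [hie, integral_congr_ae hua, integral_add (integrable_const _) (hint.const_mul _),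
      integral_const_mul] at hu0
    have hu1 : 1 + (ω + c) * mTr μ ω = 0 := by simpa [mTr] using hu0
    have hmne : mTr μ ω ≠ 0 := by
      intro h; rw [h] at hu1; simp at hu1
    rw [FTr]
    field_simp
    linear_combination -hu1
  · refine lt_of_le_of_ne (integral_nonneg fun x => sq_nonneg x) fun hz => ?_
    have h1 := (integral_eq_zero_iff_of_nonneg (fun x : ℝ => sq_nonneg x) hsq).1 hz.symm
    have h2 : ∀ᵐ x ∂μ, x = 0 := by
      filter_upwards [h1] with x hx
      simpa using hx
    apply hnd 0
    have h3 : μ.map id = μ.map (fun _ => (0 : ℝ)) := Measure.map_congr h2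
    simpa [Measure.map_const] using h3

end
end

section
/- Let μ be a centered, compactly supported Borel probability measure on ℝ that is not a Dirac mass, μ̂ a Nevanlinna measure for μ, t > 1, and ω_t a subordination function for μ at time t. Let z₀ ∈ ℂ⁺ ∪ ℝ. If either (i) Im ω_t(z₀) > 0, or (ii) ω_t(z₀) ∈ ℝ with dist(ω_t(z₀), supp μ̂) > 0 and I_{μ̂}(ω_t(z₀)) < 1/(t − 1), then there exist an open disc D ⊆ ℂ centered at z₀ and an analytic function g : D → ℂ with g = ω_t on D ∩ (ℂ⁺ ∪ ℝ). -/
open MeasureTheory Complex Set Filter Topology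

noncomputable section

/-- `N(ω) = ∫ (x − ω)⁻¹ dν` has the expected derivative when `ν` a.e. stays away from `ω0`. -/
theorem aux_deriv (ν : Measure ℝ) [IsFiniteMeasure ν] (ω0 : ℂ) (d : ℝ) (hd : 0 < d)
    (h : ∀ᵐ x : ℝ ∂ν, 2 * d ≤ ‖(x : ℂ) - ω0‖) (w : ℂ) (hw : w ∈ Metric.ball ω0 d) :
    Integrable (fun x : ℝ => ((x : ℂ) - w)⁻¹) ν ∧
    Integrable (fun x : ℝ => (((x : ℂ) - w) ^ 2)⁻¹) ν ∧
    HasDerivAt (fun w : ℂ => ∫ x : ℝ, ((x : ℂ) - w)⁻¹ ∂ν)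
      (∫ x : ℝ, (((x : ℂ) - w) ^ 2)⁻¹ ∂ν) w := by
  have hlow : ∀ᵐ x : ℝ ∂ν, ∀ w ∈ Metric.ball ω0 d, d ≤ ‖(x : ℂ) - w‖ := by
    filter_upwards [h] with x hx w hw
    rw [Metric.mem_ball, dist_eq_norm] at hw
    have : ‖(x : ℂ) - ω0‖ ≤ ‖(x : ℂ) - w‖ + ‖w - ω0‖ := by
      have := norm_add_le ((x : ℂ) - w) (w - ω0)
      simpa using this
    linarith
  have hm1 : ∀ w : ℂ, AEStronglyMeasurable (fun x : ℝ => ((x : ℂ) - w)⁻¹) ν := fun w =>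
    (by fun_prop : Measurable (fun x : ℝ => ((x : ℂ) - w)⁻¹)).aestronglyMeasurable
  have hm2 : ∀ w : ℂ, AEStronglyMeasurable (fun x : ℝ => (((x : ℂ) - w) ^ 2)⁻¹) ν := fun w =>
    (by fun_prop : Measurable (fun x : ℝ => (((x : ℂ) - w) ^ 2)⁻¹)).aestronglyMeasurable
  have hi1 : Integrable (fun x : ℝ => ((x : ℂ) - w)⁻¹) ν := by
    refine Integrable.mono' (integrable_const d⁻¹) (hm1 w) ?_
    filter_upwards [hlow] with x hx
    rw [norm_inv]
    exact inv_anti₀ hd (hx w hw)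
  have key := hasDerivAt_integral_of_dominated_loc_of_deriv_le (μ := ν) (𝕜 := ℂ)
    (F := fun w (x : ℝ) => ((x : ℂ) - w)⁻¹) (F' := fun w (x : ℝ) => (((x : ℂ) - w) ^ 2)⁻¹)
    (x₀ := w) (s := Metric.ball ω0 d) (bound := fun _ => (d ^ 2)⁻¹)
    (Metric.isOpen_ball.mem_nhds hw) (Eventually.of_forall hm1) hi1 (hm2 w)
    (by
      filter_upwards [hlow] with x hx w hw
      rw [norm_inv, norm_pow]
      exact inv_anti₀ (by positivity) (pow_le_pow_left₀ hd.le (hx w hw) 2))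
    (integrable_const _)
    (by
      filter_upwards [hlow] with x hx w hw
      have hne : (x : ℂ) - w ≠ 0 := by
        rw [← norm_pos_iff]; exact hd.trans_le (hx w hw)
      have := ((hasDerivAt_id w).const_sub (x : ℂ)).inv hne
      have h' : (- -1 / ((x : ℂ) - id w) ^ 2) = (((x : ℂ) - w) ^ 2)⁻¹ := by simp
      rw [h'] at this
      exact this)
  exact ⟨hi1, key.1, key.2⟩

theorem aux_support (ν : Measure ℝ) : ∀ᵐ x ∂ν, x ∈ msupport ν := by
  rw [ae_iff]
  refine measure_null_of_locally_null _ fun x hx => ?_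
  simp only [msupport, mem_setOf_eq, not_forall] at hx
  obtain ⟨U, hU, hxU, h0⟩ := hx
  exact ⟨U, mem_nhdsWithin_of_mem_nhds (hU.mem_nhds hxU), by simpa using h0⟩

/-- Nonvanishing of the derivative in the upper half plane. -/
theorem aux_upper (ν : Measure ℝ) [IsFiniteMeasure ν] (ω0 : ℂ) (him : 0 < ω0.im) (c : ℝ)
    (hc : 0 < c)
    (h1 : Integrable (fun x : ℝ => ((x : ℂ) - ω0)⁻¹) ν)
    (h2 : Integrable (fun x : ℝ => (((x : ℂ) - ω0) ^ 2)⁻¹) ν)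
    (hz : 0 ≤ (ω0 - c * ∫ x : ℝ, ((x : ℂ) - ω0)⁻¹ ∂ν).im) :
    1 - (c : ℂ) * ∫ x : ℝ, (((x : ℂ) - ω0) ^ 2)⁻¹ ∂ν ≠ 0 := by
  intro h0
  have hq : ∀ x : ℝ, 0 < normSq ((x : ℂ) - ω0) := fun x => by
    rw [normSq_pos]; intro h
    have := congrArg Complex.im h
    simp at this; linarith
  have e1 : (∫ x : ℝ, ((x : ℂ) - ω0)⁻¹ ∂ν).im = ∫ x : ℝ, (((x : ℂ) - ω0)⁻¹).im ∂ν := by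
    simpa using (integral_im h1).symm
  have e2 : (∫ x : ℝ, (((x : ℂ) - ω0) ^ 2)⁻¹ ∂ν).re
      = ∫ x : ℝ, ((((x : ℂ) - ω0) ^ 2)⁻¹).re ∂ν := by
    simpa using (integral_re h2).symm
  have i1 : Integrable (fun x : ℝ => (((x : ℂ) - ω0)⁻¹).im) ν := by simpa using h1.im
  have i2 : Integrable (fun x : ℝ => ((((x : ℂ) - ω0) ^ 2)⁻¹).re) ν := by simpa using h2.re
  have hpt : ∀ x : ℝ, (((x : ℂ) - ω0)⁻¹).im - ω0.im * ((((x : ℂ) - ω0) ^ 2)⁻¹).re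
      = 2 * ω0.im ^ 3 / normSq ((x : ℂ) - ω0) ^ 2 := fun x => by
    have hq' := (hq x).ne'
    rw [inv_im, inv_re, map_pow]
    have : (((x : ℂ) - ω0) ^ 2).re = (x - ω0.re) ^ 2 - ω0.im ^ 2 := by
      simp [pow_two]
    rw [this]
    have hn : normSq ((x : ℂ) - ω0) = (x - ω0.re) ^ 2 + ω0.im ^ 2 := by
      simp [normSq_apply, pow_two]
    have him' : ((x : ℂ) - ω0).im = - ω0.im := by simp
    rw [him']
    field_simp
    rw [hn]; ring
  have r0 : c * (∫ x : ℝ, (((x : ℂ) - ω0) ^ 2)⁻¹ ∂ν).re = 1 := by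
    have := congrArg Complex.re h0
    simp at this; linarith
  have r1 : c * (∫ x : ℝ, ((x : ℂ) - ω0)⁻¹ ∂ν).im ≤ ω0.im := by
    simp at hz; linarith
  have hint : ∫ x : ℝ, 2 * ω0.im ^ 3 / normSq ((x : ℂ) - ω0) ^ 2 ∂ν ≤ 0 := by
    simp_rw [← hpt]
    rw [integral_sub i1 (i2.const_mul _), integral_const_mul, ← e1, ← e2]
    by_contra! hcon
    nlinarith [mul_pos hc hcon]
  have hi : Integrable (fun x : ℝ => 2 * ω0.im ^ 3 / normSq ((x : ℂ) - ω0) ^ 2) ν := by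
    simp_rw [← hpt]; exact i1.sub (i2.const_mul _)
  have hpos : ∀ x : ℝ, 0 < 2 * ω0.im ^ 3 / normSq ((x : ℂ) - ω0) ^ 2 := fun x => by
    have := hq x; positivity
  have hz0 := (integral_eq_zero_iff_of_nonneg (fun x => (hpos x).le) hi).1
    (le_antisymm hint (integral_nonneg fun x => (hpos x).le))
  have hν : ν = 0 := by
    rw [← ae_eq_bot, ← eventually_false_iff_eq_bot]
    filter_upwards [hz0] with x hx
    exact (hpos x).ne' hx
  rw [hν] at r0
  simp at r0

theorem aux_real (ν : Measure ℝ) (ω0 : ℂ) (c : ℝ) (hc : 0 < c) (hI : Inu ν ω0 < 1 / c) :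
    1 - (c : ℂ) * ∫ x : ℝ, (((x : ℂ) - ω0) ^ 2)⁻¹ ∂ν ≠ 0 := by
  intro h0
  have h1 : ‖∫ x : ℝ, (((x : ℂ) - ω0) ^ 2)⁻¹ ∂ν‖ ≤ Inu ν ω0 := by
    refine (norm_integral_le_integral_norm _).trans (le_of_eq ?_)
    unfold Inu
    congr 1; ext x
    rw [norm_inv, norm_pow, normSq_eq_norm_sq]
  have h2 : (c : ℂ) * ∫ x : ℝ, (((x : ℂ) - ω0) ^ 2)⁻¹ ∂ν = 1 := (sub_eq_zero.1 h0).symm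
  have h3 := congrArg norm h2
  rw [norm_mul, norm_real, Real.norm_of_nonneg hc.le, norm_one] at h3
  rw [lt_div_iff₀ hc] at hI
  nlinarith

/-- local analyticity of `ω_t` at `z₀` when `Im ω_t(z₀) > 0`, or when
`ω_t(z₀)` is real, at positive distance from `supp μ̂`, with `I_{μ̂}(ω_t(z₀)) < 1/(t−1)`. -/
theorem statement5 (μ : Measure ℝ) (hprob : IsProbabilityMeasure μ)
    (hcpt : ∃ K : Set ℝ, IsCompact K ∧ μ Kᶜ = 0)
    (hcent : ∫ x, x ∂μ = 0)
    (hnd : ∀ a : ℝ, μ ≠ Measure.dirac a)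
    (μh : Measure ℝ) (hNev : IsNevanlinna μ μh)
    (t : ℝ) (ht : 1 < t)
    (ωt : ℂ → ℂ) (hsub : IsSubordination μ t ωt)
    (z0 : ℂ) (hz0 : 0 ≤ z0.im)
    (hcase : 0 < (ωt z0).im ∨
      ((ωt z0).im = 0 ∧ 0 < Metric.infDist (ωt z0).re (msupport μh) ∧
        Inu μh (ωt z0) < 1 / (t - 1))) :
    ∃ r > (0 : ℝ), ∃ g : ℂ → ℂ, DifferentiableOn ℂ g (Metric.ball z0 r) ∧
      ∀ z ∈ Metric.ball z0 r ∩ {z : ℂ | 0 ≤ z.im}, g z = ωt z := by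
  obtain ⟨hfin, hN⟩ := hNev
  have hc : 0 < t - 1 := by linarith
  obtain ⟨d, hd, hsep⟩ : ∃ d > 0, ∀ᵐ x : ℝ ∂μh, 2 * d ≤ ‖(x : ℂ) - ωt z0‖ := by
    rcases hcase with him | ⟨him, hdist, -⟩
    · refine ⟨(ωt z0).im / 2, by positivity, Eventually.of_forall fun x => ?_⟩
      have := abs_im_le_norm ((x : ℂ) - ωt z0)
      simp only [sub_im, ofReal_im, zero_sub, abs_neg] at this
      rw [abs_of_pos him] at this
      linarith
    · refine ⟨Metric.infDist (ωt z0).re (msupport μh) / 2, by positivity, ?_⟩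
      filter_upwards [aux_support μh] with x hx
      have h1 := Metric.infDist_le_dist_of_mem (x := (ωt z0).re) hx
      have := abs_re_le_norm ((x : ℂ) - ωt z0)
      simp only [sub_re, ofReal_re] at this
      rw [dist_comm, Real.dist_eq] at h1
      linarith
  set Z : ℂ → ℂ := fun w => w - ((t - 1 : ℝ) : ℂ) * ∫ x : ℝ, ((x : ℂ) - w)⁻¹ ∂μh with hZ
  have hder : ∀ w ∈ Metric.ball (ωt z0) d, HasDerivAt Z
      (1 - ((t - 1 : ℝ) : ℂ) * ∫ x : ℝ, (((x : ℂ) - w) ^ 2)⁻¹ ∂μh) w := fun w hw =>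
    (hasDerivAt_id w).sub ((aux_deriv μh _ d hd hsep w hw).2.2.const_mul _)
  have hmem : ωt z0 ∈ Metric.ball (ωt z0) d := Metric.mem_ball_self hd
  have hZt : ∀ z : ℂ, 0 < z.im → Z (ωt z) = z := fun z hz => by
    have h1 := hN (ωt z) (hz.trans_le (hsub.im_ge z hz))
    have h2 := hsub.subord z hz
    simp only [hZ]
    rw [← h1]
    push_cast at h2 ⊢
    linear_combination h2
  -- extend to the closed half plane
  have hZc : ∀ z : ℂ, 0 ≤ z.im → ωt z ∈ Metric.ball (ωt z0) d → Z (ωt z) = z := by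
    intro z hz hw
    have hcl : z ∈ closure {z : ℂ | 0 < z.im} := by
      rw [closure_setOf_lt_im]; exact hz
    haveI : (𝓝[{z : ℂ | 0 < z.im}] z).NeBot := mem_closure_iff_nhdsWithin_neBot.1 hcl
    have hc1 : Tendsto ωt (𝓝[{z : ℂ | 0 < z.im}] z) (𝓝 (ωt z)) :=
      (hsub.contOn z hz).mono (fun y (hy : 0 < y.im) => hy.le)
    have hc2 := (hder _ hw).continuousAt.tendsto.comp hc1
    refine tendsto_nhds_unique hc2 ?_
    refine Tendsto.congr' ?_ (tendsto_id.mono_left nhdsWithin_le_nhds)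
    filter_upwards [self_mem_nhdsWithin] with y hy
    exact (hZt y hy).symm
  have hZ0 : Z (ωt z0) = z0 := hZc z0 hz0 hmem
  have hne : 1 - ((t - 1 : ℝ) : ℂ) * ∫ x : ℝ, (((x : ℂ) - ωt z0) ^ 2)⁻¹ ∂μh ≠ 0 := by
    rcases hcase with him | ⟨-, -, hI⟩
    · obtain ⟨i1, i2, -⟩ := aux_deriv μh _ d hd hsep _ hmem
      refine aux_upper μh _ him _ hc i1 i2 ?_
      have : (Z (ωt z0)).im = z0.im := by rw [hZ0]
      simp only [hZ] at this
      rw [this]; exact hz0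
    · exact aux_real μh _ _ hc hI
  have hCD : ContDiffAt ℂ 1 Z (ωt z0) :=
    (DifferentiableOn.analyticAt (fun w hw => (hder w hw).differentiableAt.differentiableWithinAt)
      (Metric.isOpen_ball.mem_nhds hmem)).contDiffAt
  have hsd : HasStrictDerivAt Z _ (ωt z0) := hCD.hasStrictDerivAt' (hder _ hmem) one_ne_zero
  have hfd : HasFDerivAt Z
      ((ContinuousLinearEquiv.unitsEquivAut ℂ (Units.mk0 _ hne) : ℂ ≃L[ℂ] ℂ) : ℂ →L[ℂ] ℂ)
      (ωt z0) := (hsd.hasStrictFDerivAt_equiv hne).hasFDerivAt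
  have hG := hCD.to_localInverse hfd one_ne_zero
  have hGl := (hCD.hasStrictFDerivAt' hfd one_ne_zero).eventually_left_inverse
  set G : ℂ → ℂ := hCD.localInverse hfd one_ne_zero with hGdef
  have hGl' : ∀ᶠ w in 𝓝 (ωt z0), G (Z w) = w := hGl
  rw [hZ0] at hG
  have hGd : ∀ᶠ z in 𝓝 z0, DifferentiableAt ℂ G z := by
    filter_upwards [hG.eventually (by simp)] with z hz
    exact hz.differentiableAt one_ne_zero
  have hev : ∀ᶠ z in 𝓝[{z : ℂ | 0 ≤ z.im}] z0, G z = ωt z := by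
    have hct : Tendsto ωt (𝓝[{z : ℂ | 0 ≤ z.im}] z0) (𝓝 (ωt z0)) := hsub.contOn z0 hz0
    filter_upwards [hct.eventually hGl', hct.eventually (Metric.isOpen_ball.mem_nhds hmem),
      self_mem_nhdsWithin] with z h1 h2 h3
    rwa [hZc z h3 h2] at h1
  rw [eventually_nhdsWithin_iff] at hev
  obtain ⟨r, hr, hball⟩ := Metric.eventually_nhds_iff_ball.1 (hGd.and hev)
  exact ⟨r, hr, G, fun z hz => (hball z hz).1.differentiableWithinAt,
    fun z hz => (hball z hz.1).2 hz.2⟩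

end
end

section
/- Let μ satisfy Assumption 1, let t > 1, let ω_t be a subordination function for μ at time t, let μ^{⊞t} be the associated free convolution power with continuous density ρ_t, and let E_t be an exterior point of 𝒱_t such that E_t/t is not an atom of μ of mass ≥ 1 − 1/t. Then there exist constants S > 0, K > 0 and δ > 0 such that either: |ρ_t(E) − S·√(E − E_t)| ≤ K·(E − E_t) for all E ∈ (E_t, E_t + δ) and ρ_t(E) = 0 for all E ∈ (E_t − δ, E_t]; or the mirror statement holds: |ρ_t(E) − S·√(E_t − E)| ≤ K·(E_t − E) for all E ∈ (E_t − δ, E_t) and ρ_t(E) = 0 for all E ∈ [E_t, E_t + δ). -/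
open MeasureTheory Complex Set Filter Topology

noncomputable section

/-! ## Basic kernel lemmas -/

lemma aux_int_k (μ : Measure ℝ) [IsFiniteMeasure μ] (w : ℂ) (r : ℝ) (hr : 0 < r)
    (hgap : ∀ᵐ x : ℝ ∂μ, r ≤ ‖(x : ℂ) - w‖) :
    Integrable (fun x : ℝ => ((x : ℂ) - w)⁻¹) μ := by
  refine Integrable.of_bound (by fun_prop) r⁻¹ ?_
  filter_upwards [hgap] with x hx
  rw [norm_inv]
  exact inv_anti₀ hr hx

lemma aux_int_I (μ : Measure ℝ) [IsFiniteMeasure μ] (w : ℂ) (r : ℝ) (hr : 0 < r)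
    (hgap : ∀ᵐ x : ℝ ∂μ, r ≤ ‖(x : ℂ) - w‖) :
    Integrable (fun x : ℝ => (Complex.normSq ((x : ℂ) - w))⁻¹) μ := by
  refine Integrable.of_bound ?_ (r ^ 2)⁻¹ ?_
  · have : Measurable (fun x : ℝ => (Complex.normSq ((x : ℂ) - w))⁻¹) := by
      have h : Continuous (fun x : ℝ => Complex.normSq ((x : ℂ) - w)) := by
        exact Complex.continuous_normSq.comp (by fun_prop)
      exact h.measurable.inv
    exact this.aestronglyMeasurable
  · filter_upwards [hgap] with x hx
    rw [norm_inv, Complex.normSq_eq_norm_sq, norm_pow, norm_norm]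
    exact inv_anti₀ (by positivity) (by gcongr)

lemma aux_gap_im (μ : Measure ℝ) (w : ℂ) : ∀ᵐ x : ℝ ∂μ, |w.im| ≤ ‖(x : ℂ) - w‖ := by
  refine Filter.Eventually.of_forall fun x => ?_
  have := Complex.abs_im_le_norm ((x : ℂ) - w)
  simpa using this

lemma aux_im_m (μ : Measure ℝ) [IsFiniteMeasure μ] (w : ℂ) (r : ℝ) (hr : 0 < r)
    (hgap : ∀ᵐ x : ℝ ∂μ, r ≤ ‖(x : ℂ) - w‖) :
    (mTr μ w).im = w.im * Inu μ w := by
  have h := aux_int_k μ w r hr hgap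
  unfold mTr Inu
  rw [← integral_const_mul]
  have := (integral_im h)
  simp only [RCLike.im_to_complex] at this
  rw [← this]
  congr 1
  ext x
  rw [Complex.inv_im]
  simp [div_eq_mul_inv]

lemma aux_int_pos (μ : Measure ℝ) [IsProbabilityMeasure μ] (f : ℝ → ℝ) (hf : Integrable f μ)
    (hpos : ∀ᵐ x ∂μ, 0 < f x) : 0 < ∫ x, f x ∂μ := by
  have h0 : 0 ≤ᵐ[μ] f := hpos.mono fun x hx => hx.le
  refine lt_of_le_of_ne (integral_nonneg_of_ae h0) fun h => ?_
  have h1 := (integral_eq_zero_iff_of_nonneg_ae h0 hf).1 h.symm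
  have h2 : ∀ᵐ x ∂μ, False := by
    filter_upwards [h1, hpos] with x hx hx'
    simp at hx
    linarith
  simp at h2
  exact IsProbabilityMeasure.ne_zero μ h2

lemma aux_I_pos (μ : Measure ℝ) [IsProbabilityMeasure μ] (w : ℂ) (r : ℝ) (hr : 0 < r)
    (hgap : ∀ᵐ x : ℝ ∂μ, r ≤ ‖(x : ℂ) - w‖) : 0 < Inu μ w := by
  unfold Inu
  refine aux_int_pos μ _ (aux_int_I μ w r hr hgap) ?_
  filter_upwards [hgap] with x hx
  have : (x : ℂ) - w ≠ 0 := norm_pos_iff.1 (hr.trans_le hx)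
  exact inv_pos.2 (Complex.normSq_pos.2 this)

lemma aux_m_norm (μ : Measure ℝ) [IsProbabilityMeasure μ] (w : ℂ) (r : ℝ) (hr : 0 < r)
    (hgap : ∀ᵐ x : ℝ ∂μ, r ≤ ‖(x : ℂ) - w‖) : ‖mTr μ w‖ ≤ r⁻¹ := by
  unfold mTr
  have : ∀ᵐ x : ℝ ∂μ, ‖((x : ℂ) - w)⁻¹‖ ≤ r⁻¹ := by
    filter_upwards [hgap] with x hx
    rw [norm_inv]
    exact inv_anti₀ hr hx
  simpa using norm_integral_le_of_norm_le_const this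

/-- Algebra: imaginary part of the subordination identity. -/
lemma aux_alg (t : ℝ) (w z m : ℂ) (I : ℝ)
    (h : ((t : ℂ) * w - z) * m = -((t - 1 : ℝ) : ℂ)) (hI : m.im = w.im * I) :
    (t - 1) * (w.im * I) = Complex.normSq m * (t * w.im - z.im) := by
  have h2 : ((t : ℂ) * w - z) * (Complex.normSq m : ℂ) = -((t - 1 : ℝ) : ℂ) * (starRingEnd ℂ) m := by
    rw [← h, ← Complex.mul_conj]; ring
  have h3 := congrArg Complex.im h2
  simp at h3
  rw [← hI]
  linarith

/-- The subordination identity on the open half plane. -/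
lemma aux_sub (μ : Measure ℝ) [IsProbabilityMeasure μ] (t : ℝ) (ω : ℂ → ℂ)
    (hsub : IsSubordination μ t ω) (z : ℂ) (hz : 0 < z.im) :
    mTr μ (ω z) ≠ 0 ∧ ((t : ℂ) * ω z - z) * mTr μ (ω z) = -((t - 1 : ℝ) : ℂ) ∧
    (t - 1) * Inu μ (ω z) ≤ t * Complex.normSq (mTr μ (ω z)) := by
  have hw : 0 < (ω z).im := hz.trans_le (hsub.im_ge z hz)
  have hgap := aux_gap_im μ (ω z)
  have hr : 0 < |(ω z).im| := abs_pos.2 hw.ne'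
  have him := aux_im_m μ (ω z) _ hr hgap
  have hIp := aux_I_pos μ (ω z) _ hr hgap
  have hne : mTr μ (ω z) ≠ 0 := by
    intro h
    rw [h] at him
    simp at him
    rcases him with h | h <;> linarith
  have h1 : ((t : ℂ) * ω z - z) * mTr μ (ω z) = -((t - 1 : ℝ) : ℂ) := by
    rw [hsub.subord z hz]
    unfold FTr
    field_simp
  refine ⟨hne, h1, ?_⟩
  have := aux_alg t (ω z) z _ _ h1 him
  have h4 : 0 ≤ Complex.normSq (mTr μ (ω z)) * z.im := mul_nonneg (Complex.normSq_nonneg _) hz.le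
  have h5 : (ω z).im * ((t - 1) * Inu μ (ω z)) ≤ (ω z).im * (t * Complex.normSq (mTr μ (ω z))) := by
    nlinarith
  exact le_of_mul_le_mul_left h5 hw

/-! ## Stieltjes inversion -/

/-- Pointwise limit of the arctan step. -/
lemma aux_arctan_lim (c y : ℝ) :
    Tendsto (fun η : ℝ => Real.arctan ((c - y) / η)) (𝓝[>] 0)
      (𝓝 (Real.pi / 2 * ((Set.Iio c).indicator 1 y - (Set.Ioi c).indicator 1 y))) := by
  rcases lt_trichotomy y c with h | h | h
  · have h1 : Tendsto (fun η : ℝ => (c - y) / η) (𝓝[>] 0) atTop := by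
      simp only [div_eq_mul_inv]
      exact Filter.Tendsto.const_mul_atTop (by linarith) tendsto_inv_nhdsGT_zero
    have h2 := (Real.tendsto_arctan_atTop.mono_right nhdsWithin_le_nhds).comp h1
    simpa [h, h.le, Function.comp_def] using h2
  · subst h
    simp
  · have h1 : Tendsto (fun η : ℝ => (c - y) / η) (𝓝[>] 0) atBot := by
      simp only [div_eq_mul_inv]
      exact Filter.Tendsto.const_mul_atTop_of_neg (by linarith) tendsto_inv_nhdsGT_zero
    have h2 := (Real.tendsto_arctan_atBot.mono_right nhdsWithin_le_nhds).comp h1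
    simpa [h, h.le, Function.comp_def] using h2

lemma aux_poisson_int (a b y η : ℝ) (hη : 0 < η) :
    ∫ x in a..b, η * (Complex.normSq ((y : ℂ) - (x + η * Complex.I)))⁻¹
      = Real.arctan ((b - y) / η) - Real.arctan ((a - y) / η) := by
  have hd : ∀ x : ℝ, HasDerivAt (fun x : ℝ => Real.arctan ((x - y) / η))
      (η * (Complex.normSq ((y : ℂ) - (x + η * Complex.I)))⁻¹) x := by
    intro x
    have h1 : HasDerivAt (fun x : ℝ => (x - y) / η) (1 / η) x :=
      ((hasDerivAt_id x).sub_const y).div_const η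
    convert h1.arctan using 1
    have : Complex.normSq ((y : ℂ) - (x + η * Complex.I)) = (x - y) ^ 2 + η ^ 2 := by
      simp [Complex.normSq_apply]; ring
    rw [this]
    field_simp
    ring
  refine intervalIntegral.integral_eq_sub_of_hasDerivAt (fun x _ => hd x) ?_
  apply Continuous.intervalIntegrable
  have : ∀ x : ℝ, Complex.normSq ((y : ℂ) - (x + η * Complex.I)) ≠ 0 := by
    intro x
    have : Complex.normSq ((y : ℂ) - (x + η * Complex.I)) = (x - y) ^ 2 + η ^ 2 := by
      simp [Complex.normSq_apply]; ring
    rw [this]; positivity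
  refine continuous_const.mul (Continuous.inv₀ ?_ this)
  exact Complex.continuous_normSq.comp (by fun_prop)

lemma aux_int_m (ν : Measure ℝ) [IsProbabilityMeasure ν] (a b η : ℝ) (hη : 0 < η) :
    ∫ x in a..b, (mTr ν (x + η * Complex.I)).im
      = ∫ y, (Real.arctan ((b - y) / η) - Real.arctan ((a - y) / η)) ∂ν := by
  have h1 : ∀ x : ℝ, (mTr ν (x + η * Complex.I)).im
      = ∫ y : ℝ, η * (Complex.normSq ((y : ℂ) - (x + η * Complex.I)))⁻¹ ∂ν := by
    intro x
    have := aux_im_m ν (x + η * Complex.I) _ (by simpa using hη.ne')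
      (aux_gap_im ν (x + η * Complex.I))
    rw [this, integral_const_mul]
    simp [Inu]
  simp_rw [h1]
  rw [intervalIntegral_integral_swap]
  · simp_rw [aux_poisson_int a b _ η hη]
  · haveI : IsFiniteMeasure (volume.restrict (Set.uIoc a b)) := by
      unfold Set.uIoc; infer_instance
    refine Integrable.of_bound ?_ (η * (η ^ 2)⁻¹) ?_
    · refine Measurable.aestronglyMeasurable ?_
      have h : Continuous (fun p : ℝ × ℝ => Complex.normSq ((p.2 : ℂ) - (p.1 + η * Complex.I))) := by
        exact Complex.continuous_normSq.comp (by fun_prop)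
      exact (h.measurable.inv).const_mul η
    · refine Filter.Eventually.of_forall fun p => ?_
      have : Complex.normSq ((p.2 : ℂ) - (p.1 + η * Complex.I)) = (p.1 - p.2) ^ 2 + η ^ 2 := by
        simp [Complex.normSq_apply]; ring
      simp only [Function.uncurry, this]
      rw [Real.norm_of_nonneg (by positivity)]
      gcongr
      nlinarith [sq_nonneg (p.1 - p.2)]

lemma aux_stieltjes1 (ν : Measure ℝ) [IsProbabilityMeasure ν] (E0 δ C : ℝ) (M : ℂ → ℂ)
    (hM : ContinuousOn M {z | 0 ≤ z.im ∧ ‖z - E0‖ < δ})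
    (hMm : ∀ z : ℂ, 0 < z.im → ‖z - E0‖ < δ → M z = mTr ν z)
    (hC : ∀ z : ℂ, 0 ≤ z.im → ‖z - E0‖ < δ → ‖M z‖ ≤ C) (a b : ℝ) (hab : a < b)
    (ha : E0 - δ < a) (hb : b < E0 + δ) :
    Real.pi / 2 * (ν.real (Set.Ioo a b) + ν.real (Set.Icc a b)) = ∫ x in a..b, (M x).im := by
  -- left side
  have hL : Tendsto (fun η : ℝ => ∫ y, (Real.arctan ((b - y) / η) - Real.arctan ((a - y) / η)) ∂ν)
      (𝓝[>] 0) (𝓝 (∫ y, (Real.pi / 2 * ((Set.Ioo a b).indicator 1 y + (Set.Icc a b).indicator 1 y)) ∂ν)) := by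
    refine MeasureTheory.tendsto_integral_filter_of_dominated_convergence (fun _ => Real.pi) ?_ ?_ ?_ ?_
    · refine Filter.Eventually.of_forall fun η => ?_
      refine Measurable.aestronglyMeasurable ?_
      have := Real.continuous_arctan
      exact (Continuous.sub (this.comp (by fun_prop)) (this.comp (by fun_prop))).measurable
    · refine Filter.Eventually.of_forall fun η => Filter.Eventually.of_forall fun y => ?_
      rw [Real.norm_eq_abs, abs_le]
      have h1 := Real.arctan_lt_pi_div_two ((b - y) / η)
      have h2 := Real.neg_pi_div_two_lt_arctan ((b - y) / η)
      have h3 := Real.arctan_lt_pi_div_two ((a - y) / η)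
      have h4 := Real.neg_pi_div_two_lt_arctan ((a - y) / η)
      constructor <;> linarith
    · exact integrable_const _
    · refine Filter.Eventually.of_forall fun y => ?_
      convert (aux_arctan_lim b y).sub (aux_arctan_lim a y) using 2
      rw [← mul_sub]
      congr 1
      simp only [Set.indicator, Set.mem_Ioo, Set.mem_Icc, Set.mem_Iio, Set.mem_Ioi, Pi.one_apply]
      rcases lt_trichotomy y a with h | h | h <;> rcases lt_trichotomy y b with h' | h' | h' <;>
        first
        | (exfalso; linarith)
        | (simp [h, h', h.le, h'.le, h.not_gt, h'.not_gt, h.not_ge, h'.not_ge]; try norm_num)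
        | (subst h; simp [h', h'.le, h'.not_gt, h'.not_ge]; try norm_num)
        | (subst h'; simp [h, h.le, h.not_gt, h.not_ge]; try norm_num)
  have hR : Tendsto (fun η : ℝ => ∫ x in a..b, (mTr ν (x + η * Complex.I)).im)
      (𝓝[>] 0) (𝓝 (∫ x in a..b, (M x).im)) := by
    set m0 := min (a - (E0 - δ)) (E0 + δ - b) with hm0
    have hm0p : 0 < m0 := lt_min (by linarith) (by linarith)
    have hin : ∀ η : ℝ, 0 ≤ η → η < m0 → ∀ x ∈ Set.Icc a b,
        ‖((x : ℂ) + η * Complex.I) - E0‖ < δ := by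
      intro η h0 h1 x hx
      have h2 : η < a - (E0 - δ) := h1.trans_le (min_le_left _ _)
      have h3 : η < E0 + δ - b := h1.trans_le (min_le_right _ _)
      have : ((x : ℂ) + η * Complex.I) - E0 = ((x - E0 : ℝ) : ℂ) + η * Complex.I := by
        push_cast; ring
      rw [this]
      refine (norm_add_le _ _).trans_lt ?_
      rw [norm_mul, Complex.norm_I, mul_one, Complex.norm_real, Complex.norm_real,
        Real.norm_eq_abs, Real.norm_eq_abs, abs_of_nonneg h0]
      have : |x - E0| < δ - η := by
        rw [abs_lt]; constructor <;> linarith [hx.1, hx.2]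
      linarith
    have hev : ∀ᶠ η : ℝ in 𝓝[>] 0, 0 < η ∧ η < m0 := by
      filter_upwards [Ioo_mem_nhdsGT hm0p] with η h using h
    have hsubs : Set.uIoc a b ⊆ Set.Icc a b := by
      rw [Set.uIoc_of_le hab.le]; exact Set.Ioc_subset_Icc_self
    have heq : ∀ η : ℝ, 0 < η → η < m0 → ∀ x ∈ Set.Icc a b,
        mTr ν (x + η * Complex.I) = M (x + η * Complex.I) := by
      intro η h0 h1 x hx
      exact (hMm _ (by simpa using h0) (hin η h0.le h1 x hx)).symm
    refine intervalIntegral.tendsto_integral_filter_of_dominated_convergence (fun _ => C) ?_ ?_ ?_ ?_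
    · filter_upwards [hev] with η hη
      have hc : ContinuousOn (fun x : ℝ => (M (x + η * Complex.I)).im) (Set.uIoc a b) := by
        refine Complex.continuous_im.comp_continuousOn (hM.comp (by fun_prop) ?_)
        intro x hx
        exact ⟨by simpa using hη.1.le, hin η hη.1.le hη.2 x (hsubs hx)⟩
      refine (hc.aestronglyMeasurable measurableSet_uIoc).congr ?_
      filter_upwards [ae_restrict_mem measurableSet_uIoc] with x hx
      rw [heq η hη.1 hη.2 x (hsubs hx)]
    · filter_upwards [hev] with η hη
      refine Filter.Eventually.of_forall fun x hx => ?_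
      rw [heq η hη.1 hη.2 x (hsubs hx)]
      exact (Complex.abs_im_le_norm _).trans
        (hC _ (by simpa using hη.1.le) (hin η hη.1.le hη.2 x (hsubs hx)))
    · exact intervalIntegrable_const
    · refine Filter.Eventually.of_forall fun x hx => ?_
      have hx' := hsubs hx
      have hxm : (x : ℂ) ∈ {z : ℂ | 0 ≤ z.im ∧ ‖z - E0‖ < δ} := by
        refine ⟨by simp, ?_⟩
        simpa using hin 0 le_rfl hm0p x hx'
      have hc : Tendsto M (𝓝[{z : ℂ | 0 ≤ z.im ∧ ‖z - E0‖ < δ}] (x : ℂ)) (𝓝 (M x)) := hM _ hxm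
      have ht : Tendsto (fun η : ℝ => (x : ℂ) + η * Complex.I) (𝓝[>] 0)
          (𝓝[{z : ℂ | 0 ≤ z.im ∧ ‖z - E0‖ < δ}] (x : ℂ)) := by
        refine tendsto_nhdsWithin_iff.2 ⟨?_, ?_⟩
        · have : Continuous (fun η : ℝ => (x : ℂ) + η * Complex.I) := by fun_prop
          have := (this.tendsto 0).mono_left (nhdsWithin_le_nhds (s := Set.Ioi 0))
          simpa using this
        · filter_upwards [hev] with η hη
          exact ⟨by simpa using hη.1.le, hin η hη.1.le hη.2 x hx'⟩
      refine ((Complex.continuous_im.tendsto _).comp (hc.comp ht)).congr' ?_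
      filter_upwards [hev] with η hη
      simp only [Function.comp]
      rw [heq η hη.1 hη.2 x hx']
  have hR' : Tendsto (fun η : ℝ => ∫ y, (Real.arctan ((b - y) / η) - Real.arctan ((a - y) / η)) ∂ν)
      (𝓝[>] 0) (𝓝 (∫ x in a..b, (M x).im)) := by
    refine hR.congr' ?_
    filter_upwards [self_mem_nhdsWithin] with η hη
    exact aux_int_m ν a b η hη
  rw [← tendsto_nhds_unique hL hR', integral_const_mul, integral_add]
  · rw [integral_indicator_one measurableSet_Ioo, integral_indicator_one measurableSet_Icc]
  · exact (integrable_const (1 : ℝ)).indicator measurableSet_Ioo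
  · exact (integrable_const (1 : ℝ)).indicator measurableSet_Icc

lemma aux_stieltjes2 (ν : Measure ℝ) [IsProbabilityMeasure ν] (E0 δ C : ℝ) (M : ℂ → ℂ)
    (hM : ContinuousOn M {z | 0 ≤ z.im ∧ ‖z - E0‖ < δ})
    (hMm : ∀ z : ℂ, 0 < z.im → ‖z - E0‖ < δ → M z = mTr ν z)
    (hC : ∀ z : ℂ, 0 ≤ z.im → ‖z - E0‖ < δ → ‖M z‖ ≤ C) (a b : ℝ) (hab : a < b)
    (ha : E0 - δ < a) (hb : b < E0 + δ) :
    Real.pi * ν.real (Set.Icc a b) = ∫ x in a..b, (M x).im := by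
  have hpi := Real.pi_pos
  have hpt : ∀ c : ℝ, E0 - δ < c → c < E0 + δ → ν.real {c} = 0 := by
    intro c hc1 hc2
    by_contra hne
    have hpos : 0 < ν.real {c} := lt_of_le_of_ne measureReal_nonneg (Ne.symm hne)
    set s := min ((E0 + δ - c) / 2) (Real.pi / 2 * ν.real {c} / (2 * (|C| + 1))) with hs
    have hs0 : 0 < s := lt_min (by linarith) (by positivity)
    have hs1 : c + s < E0 + δ := by
      have := min_le_left ((E0 + δ - c) / 2) (Real.pi / 2 * ν.real {c} / (2 * (|C| + 1)))
      linarith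
    have h := aux_stieltjes1 ν E0 δ C M hM hMm hC c (c + s) (by linarith) hc1 hs1
    have h1 : ν.real {c} ≤ ν.real (Set.Icc c (c + s)) :=
      measureReal_mono (by simpa using hs0.le)
    have h2 : (0 : ℝ) ≤ ν.real (Set.Ioo c (c + s)) := measureReal_nonneg
    have h3 : ‖∫ x in c..(c + s), (M x).im‖ ≤ C * |c + s - c| := by
      refine intervalIntegral.norm_integral_le_of_norm_le_const fun x hx => ?_
      rw [Set.uIoc_of_le (by linarith)] at hx
      refine (Complex.abs_im_le_norm _).trans (hC _ (by simp) ?_)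
      rw [← Complex.ofReal_sub, Complex.norm_real, Real.norm_eq_abs, abs_lt]
      constructor <;> linarith [hx.1, hx.2]
    have h4 : s ≤ Real.pi / 2 * ν.real {c} / (2 * (|C| + 1)) := min_le_right _ _
    rw [le_div_iff₀ (by positivity)] at h4
    have h5 := (le_abs_self _).trans h3
    rw [add_sub_cancel_left, abs_of_pos hs0, ← h] at h5
    have h6 : C * s ≤ |C| * s := by gcongr; exact le_abs_self C
    have h7 : 0 < Real.pi / 2 * ν.real {c} := by positivity
    have h8 : Real.pi / 2 * ν.real {c} ≤
        Real.pi / 2 * (ν.real (Set.Ioo c (c + s)) + ν.real (Set.Icc c (c + s))) := by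
      gcongr; linarith
    nlinarith
  have h := aux_stieltjes1 ν E0 δ C M hM hMm hC a b hab ha hb
  have h1 : ν.real (Set.Icc a b) ≤ ν.real (Set.Ioo a b) + ν.real {a} + ν.real {b} := by
    have : Set.Icc a b ⊆ (Set.Ioo a b ∪ {a}) ∪ {b} := by
      intro x hx
      rcases hx.1.lt_or_eq with h | h
      · rcases hx.2.lt_or_eq with h' | h'
        · exact Or.inl (Or.inl ⟨h, h'⟩)
        · exact Or.inr h'
      · exact Or.inl (Or.inr h.symm)
    refine (measureReal_mono this).trans ((measureReal_union_le _ _).trans ?_)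
    gcongr
    exact measureReal_union_le _ _
  have h2 : ν.real (Set.Ioo a b) ≤ ν.real (Set.Icc a b) := measureReal_mono Set.Ioo_subset_Icc_self
  rw [hpt a ha (by linarith), hpt b (by linarith) hb] at h1
  have h3 : ν.real (Set.Ioo a b) = ν.real (Set.Icc a b) := by linarith
  rw [← h, h3]; ring

lemma aux_stieltjes (ν : Measure ℝ) [IsProbabilityMeasure ν] (E0 δ C : ℝ) (M : ℂ → ℂ)
    (hM : ContinuousOn M {z | 0 ≤ z.im ∧ ‖z - E0‖ < δ})
    (hMm : ∀ z : ℂ, 0 < z.im → ‖z - E0‖ < δ → M z = mTr ν z)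
    (hC : ∀ z : ℂ, 0 ≤ z.im → ‖z - E0‖ < δ → ‖M z‖ ≤ C)
    (ρt : ℝ → ENNReal) (hcont : Continuous ρt) (hρ : ν.rnDeriv volume =ᵐ[volume] ρt)
    (E : ℝ) (hE : E ∈ Set.Ioo (E0 - δ) (E0 + δ)) :
    ρt E = ENNReal.ofReal ((M E).im / Real.pi) := by
  have hpi := Real.pi_pos
  have hcR : ContinuousOn (fun x : ℝ => (M x).im) (Set.Ioo (E0 - δ) (E0 + δ)) := by
    refine Complex.continuous_im.comp_continuousOn (hM.comp (by fun_prop) ?_)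
    intro x hx
    refine ⟨by simp, ?_⟩
    rw [← Complex.ofReal_sub, Complex.norm_real, Real.norm_eq_abs, abs_lt]
    constructor <;> linarith [hx.1, hx.2]
  have key : ∀ᵐ x ∂(volume.restrict (Set.Ioo (E0 - δ) (E0 + δ))),
      ρt x = ENNReal.ofReal ((M x).im / Real.pi) := by
    filter_upwards [ae_restrict_of_ae hρ, ae_restrict_of_ae (Besicovitch.ae_tendsto_rnDeriv ν volume),
      ae_restrict_mem measurableSet_Ioo] with x hx1 hx2 hx3
    rw [← hx1]
    refine tendsto_nhds_unique hx2 ?_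
    have hlim : Tendsto (fun r : ℝ => (∫ y in (x - r)..(x + r), (M y).im) / (2 * r)) (𝓝[>] 0)
        (𝓝 (M x).im) := by
      rw [Metric.tendsto_nhds]
      intro ε hε
      have hca : ContinuousAt (fun x : ℝ => (M x).im) x :=
        hcR.continuousAt (Ioo_mem_nhds hx3.1 hx3.2)
      obtain ⟨s, hs, hs'⟩ := Metric.continuousAt_iff.1 hca (ε / 2) (by linarith)
      have hpos : 0 < min s (min (x - (E0 - δ)) (E0 + δ - x)) :=
        lt_min hs (lt_min (by linarith [hx3.1]) (by linarith [hx3.2]))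
      filter_upwards [Ioo_mem_nhdsGT hpos] with r hr
      have hr0 : 0 < r := hr.1
      have hr1 : r < s := hr.2.trans_le (min_le_left _ _)
      have hr2 : r < x - (E0 - δ) := hr.2.trans_le ((min_le_right _ _).trans (min_le_left _ _))
      have hr3 : r < E0 + δ - x := hr.2.trans_le ((min_le_right _ _).trans (min_le_right _ _))
      have hii : IntervalIntegrable (fun y : ℝ => (M y).im) volume (x - r) (x + r) := by
        refine (hcR.mono ?_).intervalIntegrable
        rw [Set.uIcc_of_le (by linarith)]
        intro y hy
        exact ⟨by linarith [hy.1], by linarith [hy.2]⟩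
      have hb : ‖∫ y in (x - r)..(x + r), ((M y).im - (M x).im)‖ ≤ ε / 2 * |x + r - (x - r)| := by
        refine intervalIntegral.norm_integral_le_of_norm_le_const fun y hy => ?_
        rw [Set.uIoc_of_le (by linarith)] at hy
        have := hs' (x := y) (by rw [Real.dist_eq, abs_lt]; constructor <;> linarith [hy.1, hy.2])
        rw [Real.dist_eq] at this
        exact this.le
      rw [intervalIntegral.integral_sub hii intervalIntegrable_const,
        intervalIntegral.integral_const, smul_eq_mul] at hb
      have e1 : x + r - (x - r) = 2 * r := by ring
      rw [e1, abs_of_pos (by positivity : (0 : ℝ) < 2 * r)] at hb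
      rw [Real.dist_eq]
      have e2 : (∫ y in (x - r)..(x + r), (M y).im) / (2 * r) - (M x).im
          = ((∫ y in (x - r)..(x + r), (M y).im) - 2 * r * (M x).im) / (2 * r) := by
        field_simp
      rw [e2, abs_div, abs_of_pos (by positivity : (0 : ℝ) < 2 * r), div_lt_iff₀ (by positivity)]
      rw [Real.norm_eq_abs] at hb
      nlinarith
    have hlim2 := ENNReal.tendsto_ofReal (hlim.div_const Real.pi)
    refine hlim2.congr' ?_
    have hpos : 0 < (min (x - (E0 - δ)) (E0 + δ - x)) :=
        (lt_min (by linarith [hx3.1]) (by linarith [hx3.2]))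
    filter_upwards [Ioo_mem_nhdsGT hpos] with r hr
    have hr0 : 0 < r := hr.1
    have hr2 : r < x - (E0 - δ) := hr.2.trans_le (min_le_left _ _)
    have hr3 : r < E0 + δ - x := hr.2.trans_le (min_le_right _ _)
    have := aux_stieltjes2 ν E0 δ C M hM hMm hC (x - r) (x + r) (by linarith) (by linarith)
      (by linarith)
    rw [← this, Real.volume_closedBall, Real.closedBall_eq_Icc, ← ofReal_measureReal,
      ← ENNReal.ofReal_div_of_pos (by positivity)]
    congr 1
    field_simp
  refine Measure.eqOn_open_of_ae_eq (μ := volume) key isOpen_Ioo hcont.continuousOn ?_ hE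
  exact ENNReal.continuous_ofReal.comp_continuousOn (hcR.div_const _)

/-! ## Lower bounds on small balls for Jacobi measures -/

lemma aux_pow1 (β L : ℝ) (hβ : β ∈ Set.Ioo (-1 : ℝ) 1) (hL : 0 < L) :
    ∃ c > (0 : ℝ), ∃ γ : ℝ, 0 ≤ γ ∧ γ < 1 ∧
      ∀ q p : ℝ, 0 < q → q ≤ p → p ≤ L → c * q ^ γ ≤ p ^ β := by
  rcases le_or_gt 0 β with h | h
  · refine ⟨1, one_pos, β, h, hβ.2, fun q p hq hqp _ => ?_⟩
    rw [one_mul]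
    exact Real.rpow_le_rpow hq.le hqp h
  · refine ⟨L ^ β, Real.rpow_pos_of_pos hL _, 0, le_rfl, one_pos, fun q p hq hqp hp => ?_⟩
    rw [Real.rpow_zero, mul_one]
    exact Real.rpow_le_rpow_of_nonpos (hq.trans_le hqp) hp h.le

lemma aux_jac_Ioo (μ : Measure ℝ) (d : JacobiData μ) (j : Fin d.n) (s₁ s₂ κ : ℝ)
    (hs : s₁ ≤ s₂) (hκ : 0 ≤ κ)
    (h1 : d.Em j ≤ s₁) (h2 : s₂ ≤ d.Ep j)
    (hlow : ∀ E ∈ Set.Ioo s₁ s₂,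
      κ ≤ (d.Cj j)⁻¹ * ((E - d.Em j) ^ (d.βm j) * (d.Ep j - E) ^ (d.βp j))) :
    κ * (s₂ - s₁) ≤ μ.real (Set.Ioo s₁ s₂) := by
  haveI := d.prob
  have hle : ENNReal.ofReal (κ * (s₂ - s₁)) ≤ μ (Set.Ioo s₁ s₂) := by
    have e : μ (Set.Ioo s₁ s₂) = (volume.withDensity (fun x => ENNReal.ofReal (d.ρ x))
      + ∑ a ∈ d.atoms, ENNReal.ofReal (d.w a) • Measure.dirac a) (Set.Ioo s₁ s₂) := by
      rw [← d.decomp]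
    rw [e, Measure.add_apply, withDensity_apply _ measurableSet_Ioo]
    refine le_trans ?_ le_self_add
    have hsub : Set.Ioo s₁ s₂ ⊆ Set.Icc (d.Em j) (d.Ep j) := fun x hx =>
      ⟨h1.trans hx.1.le, hx.2.le.trans h2⟩
    have hae : ∀ᵐ E ∂(volume.restrict (Set.Ioo s₁ s₂)), ENNReal.ofReal κ ≤ ENNReal.ofReal (d.ρ E) := by
      filter_upwards [ae_restrict_of_ae_restrict_of_subset hsub (d.powerLaw j),
        ae_restrict_mem measurableSet_Ioo] with E hE hE'
      exact ENNReal.ofReal_le_ofReal ((hlow E hE').trans hE.1)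
    calc ENNReal.ofReal (κ * (s₂ - s₁)) = ∫⁻ _ in Set.Ioo s₁ s₂, ENNReal.ofReal κ := by
          rw [setLIntegral_const, Real.volume_Ioo, ENNReal.ofReal_mul hκ]
      _ ≤ _ := lintegral_mono_ae hae
  rw [measureReal_def]
  exact (ENNReal.ofReal_le_iff_le_toReal (measure_ne_top _ _)).1 hle

lemma aux_jac_lower (μ : Measure ℝ) (d : JacobiData μ) (j : Fin d.n) (x0 : ℝ)
    (hx0 : x0 ∈ Set.Icc (d.Em j) (d.Ep j)) :
    ∃ c > (0 : ℝ), ∃ γ : ℝ, 0 ≤ γ ∧ γ < 1 ∧ ∃ h0 > (0 : ℝ), ∀ h : ℝ, 0 < h → h < h0 →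
      c * h ^ γ * h ≤ μ.real (Metric.closedBall x0 h) := by
  haveI := d.prob
  have hlt := d.lt j
  have hC : 0 < d.Cj j := one_pos.trans_le (d.Cj_ge j)
  set L := d.Ep j - d.Em j with hL
  have hLp : 0 < L := by linarith
  obtain ⟨c1, hc1, γ1, hγ1, hγ1', H1⟩ := aux_pow1 (d.βm j) L (d.βm_mem j) hLp
  obtain ⟨c2, hc2, γ2, hγ2, hγ2', H2⟩ := aux_pow1 (d.βp j) L (d.βp_mem j) hLp
  rcases hx0.2.lt_or_eq with hcase | hcase
  · -- go to the right
    set k := (d.Ep j - x0) / 2 with hk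
    have hkp : 0 < k := by linarith
    have hA : 0 < (d.Cj j)⁻¹ * (c1 * (c2 * k ^ γ2)) := by positivity
    refine ⟨(d.Cj j)⁻¹ * (c1 * (c2 * k ^ γ2)) * (1 / 2) ^ γ1 / 2, by positivity, γ1, hγ1, hγ1', k, hkp,
      fun h hh hhk => ?_⟩
    have := aux_jac_Ioo μ d j (x0 + h / 2) (x0 + h) ((d.Cj j)⁻¹ * ((c1 * (h / 2) ^ γ1) * (c2 * k ^ γ2)))
      (by linarith) (by positivity) (by linarith [hx0.1]) (by linarith) (by
        intro E hE
        have a1 := H1 (h / 2) (E - d.Em j) (by positivity) (by linarith [hE.1, hx0.1])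
          (by linarith [hE.2])
        have a2 := H2 k (d.Ep j - E) hkp (by linarith [hE.2]) (by linarith [hE.1, hx0.1])
        have a3 := le_trans (by positivity) a1
        gcongr)
    have hsub : Set.Ioo (x0 + h / 2) (x0 + h) ⊆ Metric.closedBall x0 h := by
      rw [Real.closedBall_eq_Icc]
      intro y hy
      exact ⟨by linarith [hy.1], hy.2.le⟩
    refine le_trans (le_of_eq ?_) (this.trans (measureReal_mono hsub))
    have e : (h / 2) ^ γ1 = h ^ γ1 * (1 / 2) ^ γ1 := by
      rw [← Real.mul_rpow hh.le (by norm_num)]; congr 1; ring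
    rw [e]; ring
  · set k := L / 2 with hk
    have hkp : 0 < k := by linarith
    refine ⟨(d.Cj j)⁻¹ * (c2 * (c1 * k ^ γ1)) * (1 / 2) ^ γ2 / 2, by positivity, γ2, hγ2, hγ2', k, hkp,
      fun h hh hhk => ?_⟩
    have := aux_jac_Ioo μ d j (x0 - h) (x0 - h / 2) ((d.Cj j)⁻¹ * ((c1 * k ^ γ1) * (c2 * (h / 2) ^ γ2)))
      (by linarith) (by positivity) (by linarith) (by linarith) (by
        intro E hE
        have a1 := H1 k (E - d.Em j) hkp (by linarith [hE.1])
          (by linarith [hE.2])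
        have a2 := H2 (h / 2) (d.Ep j - E) (by positivity) (by linarith [hE.2]) (by linarith [hE.1])
        have a3 := le_trans (by positivity) a1
        gcongr)
    have hsub : Set.Ioo (x0 - h) (x0 - h / 2) ⊆ Metric.closedBall x0 h := by
      rw [Real.closedBall_eq_Icc]
      intro y hy
      exact ⟨by linarith [hy.1], by linarith [hy.2]⟩
    refine le_trans (le_of_eq ?_) (this.trans (measureReal_mono hsub))
    have e : (h / 2) ^ γ2 = h ^ γ2 * (1 / 2) ^ γ2 := by
      rw [← Real.mul_rpow hh.le (by norm_num)]; congr 1; ring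
    rw [e]; ring

/-- A Jacobi measure is not concentrated at a point. -/
lemma aux_jac_nondeg (μ : Measure ℝ) (d : JacobiData μ) (x0 : ℝ) :
    ¬ ∀ᵐ x ∂μ, x = x0 := by
  intro hx
  haveI := d.prob
  let j : Fin d.n := ⟨0, d.npos⟩
  have hlt := d.lt j
  have key : ∀ y ∈ Set.Icc (d.Em j) (d.Ep j), y ≠ x0 → False := by
    intro y hy hne
    obtain ⟨c, hc, γ, _, _, h0, hh0, H⟩ := aux_jac_lower μ d j y hy
    have hd : 0 < |x0 - y| := abs_pos.2 (sub_ne_zero.2 hne.symm)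
    set h := min h0 |x0 - y| / 2 with hh
    have hm : 0 < min h0 |x0 - y| := lt_min hh0 hd
    have h1 : 0 < h := by positivity
    have := H h h1 (by linarith [min_le_left h0 |x0 - y|])
    have hz : μ.real (Metric.closedBall y h) = 0 := by
      rw [measureReal_def]
      have : μ (Metric.closedBall y h) = 0 := by
        refine measure_mono_null ?_ (ae_iff.1 hx)
        intro z hz hzz
        subst hzz
        rw [Metric.mem_closedBall, Real.dist_eq] at hz
        linarith [min_le_right h0 |z - y|]
      simp [this]
    rw [hz] at this
    have : 0 < c * h ^ γ * h := by positivity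
    linarith
  by_cases h : d.Em j = x0
  · exact key (d.Ep j) ⟨hlt.le, le_rfl⟩ (by rw [← h]; exact hlt.ne')
  · exact key (d.Em j) ⟨le_rfl, hlt.le⟩ h

/-- If small balls have mass `O(h²)`, the point is at positive distance from the support. -/
lemma aux_jac_gap (μ : Measure ℝ) (d : JacobiData μ) (x0 C : ℝ)
    (hball : ∀ h : ℝ, 0 < h → h < 1 → μ.real (Metric.closedBall x0 h) ≤ C * h ^ 2) :
    ∃ r > (0 : ℝ), ∀ᵐ x ∂μ, r ≤ |x - x0| := by
  haveI := d.prob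
  have hnot1 : ∀ j, x0 ∉ Set.Icc (d.Em j) (d.Ep j) := by
    intro j hj
    obtain ⟨c, hc, γ, hγ0, hγ1, h0, hh0, H⟩ := aux_jac_lower μ d j x0 hj
    have ht : Tendsto (fun h : ℝ => C * h ^ (1 - γ)) (𝓝[>] 0) (𝓝 0) := by
      have : Continuous (fun h : ℝ => C * h ^ (1 - γ)) :=
        continuous_const.mul (Real.continuous_rpow_const (by linarith))
      have h2 := (this.tendsto 0).mono_left (nhdsWithin_le_nhds (s := Set.Ioi 0))
      rwa [Real.zero_rpow (by linarith), mul_zero] at h2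
    have hev := (ht.eventually (gt_mem_nhds hc)).and (Ioo_mem_nhdsGT (lt_min hh0 one_pos))
    obtain ⟨h, hlt, hmem⟩ := hev.exists
    have h1 := H h hmem.1 (hmem.2.trans_le (min_le_left _ _))
    have h2 := hball h hmem.1 (hmem.2.trans_le (min_le_right _ _))
    have hp : 0 < h := hmem.1
    have e : h ^ 2 = h ^ (1 - γ) * h ^ γ * h := by
      rw [← Real.rpow_add hp]; simp; ring
    rw [e] at h2
    have h3 : 0 < h ^ γ * h := by positivity
    nlinarith
  have hnot2 : ∀ a ∈ d.atoms, 0 < d.w a → a ≠ x0 := by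
    intro a ha hw hax
    subst hax
    have hle : ENNReal.ofReal (d.w a) ≤ μ {a} := by
      have e : μ {a} = (volume.withDensity (fun x => ENNReal.ofReal (d.ρ x))
        + ∑ a ∈ d.atoms, ENNReal.ofReal (d.w a) • Measure.dirac a) {a} := by
        rw [← d.decomp]
      rw [e, Measure.add_apply, Measure.finset_sum_apply]
      refine le_trans ?_ le_add_self
      refine le_trans ?_ (Finset.single_le_sum (f := fun b => (ENNReal.ofReal (d.w b) • Measure.dirac b) {a})
        (fun _ _ => zero_le) ha)
      simp
    have hle' : d.w a ≤ μ.real {a} := (ENNReal.ofReal_le_iff_le_toReal (measure_ne_top _ _)).1 hle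
    have hle2 : ∀ h : ℝ, 0 < h → h < 1 → d.w a ≤ C * h ^ 2 := fun h h1 h2 =>
      hle'.trans ((measureReal_mono (by simpa using h1.le)).trans (hball h h1 h2))
    have ht : Tendsto (fun h : ℝ => C * h ^ 2) (𝓝[>] 0) (𝓝 0) := by
      have : Continuous (fun h : ℝ => C * h ^ 2) := by fun_prop
      have h2 := (this.tendsto 0).mono_left (nhdsWithin_le_nhds (s := Set.Ioi 0))
      simpa using h2
    have hev := (ht.eventually (gt_mem_nhds hw)).and (Ioo_mem_nhdsGT one_pos)
    obtain ⟨h, hlt, hmem⟩ := hev.exists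
    linarith [hle2 h hmem.1 hmem.2]
  set T : Set ℝ := (⋃ j, Set.Icc (d.Em j) (d.Ep j)) ∪ ↑(d.atoms.filter (fun a => 0 < d.w a)) with hT
  have hTc : IsClosed T := (isClosed_iUnion_of_finite fun j => isClosed_Icc).union
    (Finset.finite_toSet _).isClosed
  have hx0T : x0 ∈ Tᶜ := by
    rintro (h | h)
    · obtain ⟨j, hj⟩ := Set.mem_iUnion.1 h
      exact hnot1 j hj
    · have := Finset.mem_filter.1 (Finset.mem_coe.1 h)
      exact hnot2 x0 this.1 this.2 rfl
  obtain ⟨r, hr, hrT⟩ := Metric.isOpen_iff.1 hTc.isOpen_compl x0 hx0T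
  refine ⟨r, hr, ?_⟩
  have hTz : μ Tᶜ = 0 := by
    have e : μ Tᶜ = (volume.withDensity (fun x => ENNReal.ofReal (d.ρ x))
        + ∑ a ∈ d.atoms, ENNReal.ofReal (d.w a) • Measure.dirac a) Tᶜ := by
      rw [← d.decomp]
    rw [e, Measure.add_apply, Measure.finset_sum_apply, withDensity_apply _ hTc.isOpen_compl.measurableSet,
      add_eq_zero]
    constructor
    · rw [setLIntegral_congr_fun (g := fun _ => 0) hTc.isOpen_compl.measurableSet]
      · simp
      · intro x hx
        have : d.ρ x = 0 := d.ρ_supp x fun h => hx (Or.inl h)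
        simp [this]
    · refine Finset.sum_eq_zero fun a ha => ?_
      rcases (d.w_nonneg a).lt_or_eq with h | h
      · have : a ∈ T := Or.inr (Finset.mem_coe.2 (Finset.mem_filter.2 ⟨ha, h⟩))
        simp [this]
      · simp [← h]
  have : ∀ᵐ x ∂μ, x ∈ T := by
    rw [ae_iff]; exact hTz
  filter_upwards [this] with x hx
  by_contra hlt
  push Not at hlt
  exact hrT (by rw [Metric.mem_ball, Real.dist_eq]; exact hlt) hx

/-! ## The boundary value of the subordination function avoids the support -/

lemma aux_cs (μ : Measure ℝ) [IsProbabilityMeasure μ] (w : ℂ) (hw : 0 < w.im) (x0 ε l : ℝ)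
    (hε : 0 < ε) (hl : 0 < l) (hwx : ‖w - x0‖ ≤ ε / 2) :
    ‖mTr μ w‖ ≤ l / 2 * Inu μ w + μ.real (Metric.closedBall x0 ε) / (2 * l) + 2 / ε := by
  have hgap := aux_gap_im μ w
  have hr : 0 < |w.im| := abs_pos.2 hw.ne'
  have hI := aux_int_I μ w _ hr hgap
  have hk := aux_int_k μ w _ hr hgap
  have hind : Integrable ((Metric.closedBall x0 ε).indicator (fun _ : ℝ => 1 / (2 * l))) μ :=
    (integrable_const _).indicator Metric.isClosed_closedBall.measurableSet
  have e : l / 2 * Inu μ w + μ.real (Metric.closedBall x0 ε) / (2 * l) + 2 / ε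
      = ∫ x, (l / 2 * (Complex.normSq ((x : ℂ) - w))⁻¹
        + (Metric.closedBall x0 ε).indicator (fun _ : ℝ => 1 / (2 * l)) x + 2 / ε) ∂μ := by
    have hAI : Integrable (fun x : ℝ => l / 2 * (Complex.normSq ((x : ℂ) - w))⁻¹
        + (Metric.closedBall x0 ε).indicator (fun _ : ℝ => 1 / (2 * l)) x) μ :=
      (hI.const_mul _).add hind
    rw [integral_add hAI (integrable_const _),
      integral_add (hI.const_mul _) hind, integral_const_mul,
      integral_indicator_const _ Metric.isClosed_closedBall.measurableSet]
    simp [Inu, div_eq_mul_inv]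
  rw [e]
  unfold mTr
  refine (norm_integral_le_integral_norm _).trans ?_
  refine integral_mono hk.norm (((hI.const_mul _).add hind).add (integrable_const _)) fun x => ?_
  simp only
  have hn : 0 < ‖(x : ℂ) - w‖ := by
    refine hr.trans_le ?_
    have := Complex.abs_im_le_norm ((x : ℂ) - w)
    simpa using this
  rw [norm_inv, Complex.normSq_eq_norm_sq]
  by_cases hx : x ∈ Metric.closedBall x0 ε
  · rw [Set.indicator_of_mem hx]
    have h1 : 0 ≤ 2 / ε := by positivity
    have h2 : ‖(x : ℂ) - w‖⁻¹ ≤ l / 2 * (‖(x : ℂ) - w‖ ^ 2)⁻¹ + 1 / (2 * l) := by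
      have h3 : 0 ≤ (l * ‖(x : ℂ) - w‖⁻¹ - 1) ^ 2 / (2 * l) := by positivity
      have h4 : (l * ‖(x : ℂ) - w‖⁻¹ - 1) ^ 2 / (2 * l)
        = l / 2 * (‖(x : ℂ) - w‖ ^ 2)⁻¹ + 1 / (2 * l) - ‖(x : ℂ) - w‖⁻¹ := by
        field_simp; ring
      linarith
    linarith
  · rw [Set.indicator_of_notMem hx]
    have h1 : 0 ≤ l / 2 * (‖(x : ℂ) - w‖ ^ 2)⁻¹ := by positivity
    have h2 : ‖(x : ℂ) - w‖⁻¹ ≤ 2 / ε := by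
      rw [Metric.mem_closedBall, Real.dist_eq, not_le] at hx
      have h3 : |x - x0| ≤ ‖(x : ℂ) - w‖ + ‖w - x0‖ := by
        have := norm_add_le ((x : ℂ) - w) (w - x0)
        rw [sub_add_sub_cancel, ← Complex.ofReal_sub, Complex.norm_real, Real.norm_eq_abs] at this
        exact this
      rw [← inv_div]
      exact inv_anti₀ (by positivity) (by linarith)
    linarith

lemma aux_gap_main (μ : Measure ℝ) (d : JacobiData μ)
    (t : ℝ) (ht : 1 < t) (ω : ℂ → ℂ) (hsub : IsSubordination μ t ω) (Et : ℝ)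
    (hatom : ¬ ENNReal.ofReal (1 - 1 / t) ≤ μ {Et / t}) :
    ∃ r > (0 : ℝ), ∀ᵐ x : ℝ ∂μ, r ≤ ‖(x : ℂ) - ω Et‖ := by
  haveI := d.prob
  have him0 : 0 ≤ (ω Et).im := hsub.mapsTo _ (by simp)
  rcases him0.lt_or_eq with hpos | hzero
  · exact ⟨|(ω Et).im|, abs_pos.2 hpos.ne', aux_gap_im μ _⟩
  set x0 := (ω Et).re with hx0
  have hωx : ω Et = (x0 : ℂ) := by
    apply Complex.ext <;> simp [hx0, ← hzero]
  set z : ℝ → ℂ := fun η => (Et : ℂ) + η * Complex.I with hz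
  have hzt : Tendsto z (𝓝[>] 0) (𝓝[{z : ℂ | 0 ≤ z.im}] (Et : ℂ)) := by
    refine tendsto_nhdsWithin_iff.2 ⟨?_, ?_⟩
    · have : Continuous z := by fun_prop
      have := (this.tendsto 0).mono_left (nhdsWithin_le_nhds (s := Set.Ioi 0))
      simpa [hz] using this
    · filter_upwards [self_mem_nhdsWithin] with η hη
      have : 0 < η := hη
      simpa [hz] using this.le
  have hwt : Tendsto (fun η => ω (z η)) (𝓝[>] 0) (𝓝 (x0 : ℂ)) := by
    rw [← hωx]
    exact (hsub.contOn (Et : ℂ) (by simp)).tendsto.comp hzt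
  have hzpos : ∀ᶠ η : ℝ in 𝓝[>] 0, 0 < (z η).im := by
    filter_upwards [self_mem_nhdsWithin] with η hη
    simpa [hz] using hη
  set q := 1 - 1 / t with hq
  have htp : 0 < t := by linarith
  have hq0 : 0 < q := by
    have : 1 / t < 1 := (div_lt_one htp).2 ht
    linarith
  have hqt : q * t = t - 1 := by rw [hq]; field_simp
  have hbdd : ∃ B : ℝ, ∀ᶠ η in 𝓝[>] (0 : ℝ), Inu μ (ω (z η)) ≤ B := by
    rcases lt_or_ge (μ.real {x0}) q with hA | hB
    · -- small atom
      have hlim := tendsto_measure_cthickening_of_isClosed (μ := μ) (s := {x0})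
        ⟨1, one_pos, measure_ne_top _ _⟩ isClosed_singleton
      have hlim' := ((ENNReal.tendsto_toReal (measure_ne_top μ {x0})).comp hlim).mono_left
        (nhdsWithin_le_nhds (s := Set.Ioi 0))
      obtain ⟨ε, hε1, hε⟩ := ((hlim'.eventually (gt_mem_nhds hA)).and self_mem_nhdsWithin).exists
      have hε : 0 < ε := hε
      simp only [Function.comp] at hε1
      rw [Metric.cthickening_singleton _ hε.le] at hε1
      change μ.real (Metric.closedBall x0 ε) < q at hε1
      set p := μ.real (Metric.closedBall x0 ε) with hp
      set Q := Real.sqrt q with hQ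
      have hQ0 : 0 < Q := Real.sqrt_pos.2 hq0
      have hQ2 : Q ^ 2 = q := Real.sq_sqrt hq0.le
      have hκ : 0 < Q / 2 - p / (2 * Q) := by
        have : Q / 2 - p / (2 * Q) = (Q ^ 2 - p) / (2 * Q) := by field_simp
        rw [this, hQ2]
        exact div_pos (by linarith) (by positivity)
      refine ⟨((2 / ε) / (Q / 2 - p / (2 * Q))) ^ 2, ?_⟩
      filter_upwards [hzpos, hwt.eventually (Metric.closedBall_mem_nhds _ (half_pos hε))] with η h1 h2
      obtain ⟨hne, _, hle⟩ := aux_sub μ t ω hsub _ h1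
      have hw : 0 < (ω (z η)).im := h1.trans_le (hsub.im_ge _ h1)
      have hIp := aux_I_pos μ (ω (z η)) _ (abs_pos.2 hw.ne') (aux_gap_im μ _)
      set X := Real.sqrt (Inu μ (ω (z η))) with hX
      have hX0 : 0 < X := Real.sqrt_pos.2 hIp
      have hX2 : X ^ 2 = Inu μ (ω (z η)) := Real.sq_sqrt hIp.le
      have hQX : Q * X ≤ ‖mTr μ (ω (z η))‖ := by
        rw [← abs_of_pos (mul_pos hQ0 hX0), ← abs_of_nonneg (norm_nonneg (mTr μ (ω (z η)))),
          ← sq_le_sq, mul_pow, hQ2, hX2, ← Complex.normSq_eq_norm_sq]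
        have : t * (q * Inu μ (ω (z η))) ≤ t * Complex.normSq (mTr μ (ω (z η))) := by
          rw [← mul_assoc, mul_comm t q, hqt]; exact hle
        exact le_of_mul_le_mul_left this htp
      have hcs := aux_cs μ (ω (z η)) hw x0 ε (Q / X) hε (by positivity) (by
        simpa [dist_eq_norm] using h2)
      rw [← hX2] at hcs ⊢
      have e1 : Q / X / 2 * X ^ 2 + p / (2 * (Q / X)) + 2 / ε
        = Q * X - X * (Q / 2 - p / (2 * Q)) + 2 / ε := by
        field_simp; ring
      rw [← hp, e1] at hcs
      have h3 : X * (Q / 2 - p / (2 * Q)) ≤ 2 / ε := by linarith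
      have h4 : X ≤ (2 / ε) / (Q / 2 - p / (2 * Q)) := (le_div_iff₀ hκ).2 h3
      gcongr
    · have hne : x0 ≠ Et / t := by
        intro h
        apply hatom
        rw [← h]
        exact (ENNReal.ofReal_le_iff_le_toReal (measure_ne_top _ _)).2 hB
      have hne' : (t : ℂ) * x0 - Et ≠ 0 := by
        rw [← Complex.ofReal_mul, ← Complex.ofReal_sub]
        rw [Complex.ofReal_ne_zero]
        intro h
        apply hne
        field_simp
        linarith
      have hlim : Tendsto (fun η => (t : ℂ) * ω (z η) - z η) (𝓝[>] 0) (𝓝 ((t : ℂ) * x0 - Et)) :=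
        (hwt.const_mul _).sub (hzt.mono_right nhdsWithin_le_nhds)
      have hlimn := hlim.norm
      set κ := ‖(t : ℂ) * x0 - Et‖ with hκ
      have hκ0 : 0 < κ := norm_pos_iff.2 hne'
      refine ⟨t / (t - 1) * ((t - 1) / (κ / 2)) ^ 2, ?_⟩
      filter_upwards [hzpos, hlimn.eventually (lt_mem_nhds (half_lt_self hκ0))] with η h1 h2
      obtain ⟨_, heq, hle⟩ := aux_sub μ t ω hsub _ h1
      have hn := congrArg norm heq
      rw [norm_mul, norm_neg, Complex.norm_real, Real.norm_of_nonneg (by linarith : (0 : ℝ) ≤ t - 1)] at hn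
      have hm : ‖mTr μ (ω (z η))‖ ≤ (t - 1) / (κ / 2) := by
        rw [le_div_iff₀ (by positivity)]
        nlinarith [norm_nonneg (mTr μ (ω (z η)))]
      rw [Complex.normSq_eq_norm_sq] at hle
      have h3 : Inu μ (ω (z η)) ≤ t / (t - 1) * ‖mTr μ (ω (z η))‖ ^ 2 := by
        have ht1 : 0 < t - 1 := by linarith
        rw [div_mul_eq_mul_div, le_div_iff₀ ht1]; linarith
      refine h3.trans ?_
      have ht1 : 0 < t - 1 := by linarith
      gcongr
  obtain ⟨B, hB⟩ := hbdd
  have hball : ∀ h : ℝ, 0 < h → h < 1 → μ.real (Metric.closedBall x0 h) ≤ (4 * B) * h ^ 2 := by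
    intro h hh _
    obtain ⟨η, h1, h2, h3⟩ := (hzpos.and (hB.and
      (hwt.eventually (Metric.closedBall_mem_nhds _ hh)))).exists
    have hw : 0 < (ω (z η)).im := h1.trans_le (hsub.im_ge _ h1)
    set w := ω (z η) with hwdef
    have hr : 0 < |w.im| := abs_pos.2 hw.ne'
    have hI := aux_int_I μ w _ hr (aux_gap_im μ _)
    have hmono : ∫ x, (Metric.closedBall x0 h).indicator (fun _ : ℝ => (1 : ℝ)) x ∂μ
        ≤ ∫ x : ℝ, 4 * h ^ 2 * (Complex.normSq ((x : ℂ) - w))⁻¹ ∂μ := by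
      refine integral_mono ((integrable_const _).indicator Metric.isClosed_closedBall.measurableSet)
        (hI.const_mul _) fun x => ?_
      simp only
      have hn : 0 < ‖(x : ℂ) - w‖ := by
        refine hr.trans_le ?_
        have := Complex.abs_im_le_norm ((x : ℂ) - w)
        simpa using this
      rw [Complex.normSq_eq_norm_sq]
      by_cases hx : x ∈ Metric.closedBall x0 h
      · rw [Set.indicator_of_mem hx, ← div_eq_mul_inv, le_div_iff₀ (by positivity)]
        rw [Metric.mem_closedBall, Real.dist_eq] at hx
        have h4 : ‖w - x0‖ ≤ h := by simpa [dist_eq_norm] using h3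
        have h5 : ‖(x : ℂ) - w‖ ≤ 2 * h := by
          have e : (x : ℂ) - w = ((x - x0 : ℝ) : ℂ) - (w - x0) := by push_cast; ring
          rw [e]
          refine (norm_sub_le _ _).trans ?_
          rw [Complex.norm_real, Real.norm_eq_abs]
          linarith
        nlinarith
      · rw [Set.indicator_of_notMem hx]; positivity
    rw [integral_indicator_const _ Metric.isClosed_closedBall.measurableSet, integral_const_mul] at hmono
    change _ ≤ 4 * h ^ 2 * Inu μ w at hmono
    simp at hmono
    have : 4 * h ^ 2 * Inu μ w ≤ 4 * h ^ 2 * B := by gcongr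
    linarith
  obtain ⟨r, hr, hrr⟩ := aux_jac_gap μ d x0 _ hball
  refine ⟨r, hr, ?_⟩
  filter_upwards [hrr] with x hx
  rw [hωx, ← Complex.ofReal_sub, Complex.norm_real, Real.norm_eq_abs]
  exact hx

/-! ## Local expansions -/

lemma aux_close {F : Type*} [NormedAddCommGroup F] [NormedSpace ℝ F]
    (μ : Measure ℝ) [IsProbabilityMeasure μ] (f g : ℝ → F) (hf : Integrable f μ)
    (hg : Integrable g μ) (c : ℝ) (h : ∀ᵐ x ∂μ, ‖f x - g x‖ ≤ c) :
    ‖∫ x, f x ∂μ - ∫ x, g x ∂μ‖ ≤ c := by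
  rw [← integral_sub hf hg]
  simpa using norm_integral_le_of_norm_le_const h

/-- Inverse moments. -/
def auxMom (μ : Measure ℝ) (a : ℝ) (k : ℕ) : ℝ := ∫ x, ((x - a)⁻¹) ^ k ∂μ

lemma aux_int_mom (μ : Measure ℝ) [IsProbabilityMeasure μ] (a r : ℝ) (hr : 0 < r)
    (hgap : ∀ᵐ x : ℝ ∂μ, r ≤ |x - a|) (k : ℕ) :
    Integrable (fun x : ℝ => ((x - a)⁻¹) ^ k) μ := by
  refine Integrable.of_bound ?_ ((r⁻¹) ^ k) ?_
  · exact (((measurable_id.sub_const a).inv).pow_const k).aestronglyMeasurable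
  · filter_upwards [hgap] with x hx
    rw [norm_pow, norm_inv, Real.norm_eq_abs]
    gcongr

lemma aux_gap_shift (μ : Measure ℝ) (w0 u : ℂ) (r : ℝ)
    (hgap : ∀ᵐ x : ℝ ∂μ, r ≤ ‖(x : ℂ) - w0‖) (hu : ‖u‖ ≤ r / 2) :
    ∀ᵐ x : ℝ ∂μ, r / 2 ≤ ‖(x : ℂ) - (w0 + u)‖ := by
  filter_upwards [hgap] with x hx
  have : ‖(x : ℂ) - w0‖ ≤ ‖(x : ℂ) - (w0 + u)‖ + ‖u‖ := by
    have := norm_add_le ((x : ℂ) - (w0 + u)) u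
    rwa [sub_add_eq_sub_sub, sub_add_cancel, ← sub_add_eq_sub_sub] at this
  linarith

lemma aux_gap_real (μ : Measure ℝ) (a r : ℝ) (hgap : ∀ᵐ x : ℝ ∂μ, r ≤ |x - a|) :
    ∀ᵐ x : ℝ ∂μ, r ≤ ‖(x : ℂ) - (a : ℂ)‖ := by
  filter_upwards [hgap] with x hx
  rwa [← Complex.ofReal_sub, Complex.norm_real, Real.norm_eq_abs]

/-- Pointwise data: with `y = 1/(x-a)` and `k = 1/(x-a-u)`. -/
lemma aux_ptw (a r x : ℝ) (u : ℂ) (hr : 0 < r) (hx : r ≤ |x - a|) (hu : ‖u‖ ≤ r / 2) :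
    |(x - a)⁻¹| ≤ r⁻¹ ∧ ‖((x : ℂ) - (a + u))⁻¹‖ ≤ 2 * r⁻¹ ∧
    ((x : ℂ) - (a + u))⁻¹ * (1 - u * ((x - a)⁻¹ : ℝ)) = ((x - a)⁻¹ : ℝ) := by
  have h1 : |(x - a)⁻¹| ≤ r⁻¹ := by
    rw [abs_inv]; exact inv_anti₀ hr hx
  have h2 : r / 2 ≤ ‖(x : ℂ) - (a + u)‖ := by
    have := norm_add_le ((x : ℂ) - (a + u)) u
    rw [sub_add_eq_sub_sub, sub_add_cancel, ← sub_add_eq_sub_sub, ← Complex.ofReal_sub,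
      Complex.norm_real, Real.norm_eq_abs] at this
    linarith
  refine ⟨h1, ?_, ?_⟩
  · rw [norm_inv]
    calc ‖(x : ℂ) - (a + u)‖⁻¹ ≤ (r / 2)⁻¹ := inv_anti₀ (by positivity) h2
      _ = 2 * r⁻¹ := by rw [inv_div, div_eq_mul_inv]
  · have h3 : (x : ℂ) - (a + u) ≠ 0 := norm_pos_iff.1 (by linarith)
    have h4 : (x : ℂ) - a ≠ 0 := by
      rw [← Complex.ofReal_sub, Complex.ofReal_ne_zero]
      intro h
      rw [h] at hx
      simp at hx
      linarith
    push_cast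
    field_simp
    ring

lemma aux_expand_m (μ : Measure ℝ) [IsProbabilityMeasure μ] (a r : ℝ) (hr : 0 < r)
    (hgap : ∀ᵐ x : ℝ ∂μ, r ≤ |x - a|) (u : ℂ) (hu : ‖u‖ ≤ r / 2) :
    ‖mTr μ (a + u) - (auxMom μ a 1 + auxMom μ a 2 * u)‖ ≤ (r⁻¹) ^ 2 * (2 * r⁻¹) * ‖u‖ ^ 2 ∧
    ‖mTr μ (a + u) - (auxMom μ a 1 + auxMom μ a 2 * u + auxMom μ a 3 * u ^ 2)‖
      ≤ (r⁻¹) ^ 3 * (2 * r⁻¹) * ‖u‖ ^ 3 := by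
  have hk := aux_int_k μ (a + u) (r / 2) (by positivity)
    (aux_gap_shift μ a u r (aux_gap_real μ a r hgap) hu)
  have hi : ∀ k, Integrable (fun x : ℝ => (((x - a)⁻¹ ^ k : ℝ) : ℂ)) μ := fun k =>
    (aux_int_mom μ a r hr hgap k).ofReal
  have he : ∀ k, ((auxMom μ a k : ℝ) : ℂ) = ∫ x : ℝ, (((x - a)⁻¹ ^ k : ℝ) : ℂ) ∂μ := fun k =>
    integral_ofReal.symm
  have hi2 : Integrable (fun x : ℝ => (((x - a)⁻¹ ^ 1 : ℝ) : ℂ) + (((x - a)⁻¹ ^ 2 : ℝ) : ℂ) * u) μ :=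
    (hi 1).add ((hi 2).mul_const u)
  have hi3 : Integrable (fun x : ℝ => (((x - a)⁻¹ ^ 1 : ℝ) : ℂ) + (((x - a)⁻¹ ^ 2 : ℝ) : ℂ) * u
      + (((x - a)⁻¹ ^ 3 : ℝ) : ℂ) * u ^ 2) μ :=
    hi2.add ((hi 3).mul_const (u ^ 2))
  constructor
  · have e : ((auxMom μ a 1 : ℝ) : ℂ) + auxMom μ a 2 * u
        = ∫ x : ℝ, ((((x - a)⁻¹ ^ 1 : ℝ) : ℂ) + (((x - a)⁻¹ ^ 2 : ℝ) : ℂ) * u) ∂μ := by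
      rw [integral_add (hi 1) ((hi 2).mul_const u), integral_mul_const, he, he]
    rw [e]
    refine aux_close μ _ _ hk hi2 _ ?_
    filter_upwards [hgap] with x hx
    obtain ⟨h1, h2, h3⟩ := aux_ptw a r x u hr hx hu
    set k := ((x : ℂ) - (a + u))⁻¹
    set y := (x - a)⁻¹
    have e2 : k - (((y ^ 1 : ℝ) : ℂ) + ((y ^ 2 : ℝ) : ℂ) * u) = (y : ℂ) ^ 2 * k * u ^ 2 := by
      push_cast
      linear_combination (1 + u * y) * h3
    rw [e2, norm_mul, norm_mul, norm_pow, norm_pow, Complex.norm_real, Real.norm_eq_abs]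
    gcongr
  · have e : ((auxMom μ a 1 : ℝ) : ℂ) + auxMom μ a 2 * u + auxMom μ a 3 * u ^ 2
        = ∫ x : ℝ, ((((x - a)⁻¹ ^ 1 : ℝ) : ℂ) + (((x - a)⁻¹ ^ 2 : ℝ) : ℂ) * u
          + (((x - a)⁻¹ ^ 3 : ℝ) : ℂ) * u ^ 2) ∂μ := by
      rw [integral_add hi2 ((hi 3).mul_const (u ^ 2)),
        integral_add (hi 1) ((hi 2).mul_const u), integral_mul_const, integral_mul_const, he, he, he]
    rw [e]
    refine aux_close μ _ _ hk hi3 _ ?_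
    filter_upwards [hgap] with x hx
    obtain ⟨h1, h2, h3⟩ := aux_ptw a r x u hr hx hu
    set k := ((x : ℂ) - (a + u))⁻¹
    set y := (x - a)⁻¹
    have e2 : k - (((y ^ 1 : ℝ) : ℂ) + ((y ^ 2 : ℝ) : ℂ) * u + ((y ^ 3 : ℝ) : ℂ) * u ^ 2)
        = (y : ℂ) ^ 3 * k * u ^ 3 := by
      push_cast
      linear_combination (1 + u * y + u ^ 2 * y ^ 2) * h3
    rw [e2, norm_mul, norm_mul, norm_pow, norm_pow, Complex.norm_real, Real.norm_eq_abs]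
    gcongr

lemma aux_expand_I (μ : Measure ℝ) [IsProbabilityMeasure μ] (a r : ℝ) (hr : 0 < r)
    (hgap : ∀ᵐ x : ℝ ∂μ, r ≤ |x - a|) (u : ℂ) (hu : ‖u‖ ≤ r / 2) :
    |Inu μ (a + u) - (auxMom μ a 2 + auxMom μ a 3 * (2 * u.re))|
      ≤ 6 * (r⁻¹) ^ 2 * (2 * r⁻¹) ^ 2 * ‖u‖ ^ 2 := by
  have hI := aux_int_I μ (a + u) (r / 2) (by positivity)
    (aux_gap_shift μ a u r (aux_gap_real μ a r hgap) hu)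
  have hi := aux_int_mom μ a r hr hgap
  have hi2 : Integrable (fun x : ℝ => (x - a)⁻¹ ^ 2 + (x - a)⁻¹ ^ 3 * (2 * u.re)) μ :=
    (hi 2).add ((hi 3).mul_const _)
  have e : auxMom μ a 2 + auxMom μ a 3 * (2 * u.re)
      = ∫ x : ℝ, ((x - a)⁻¹ ^ 2 + (x - a)⁻¹ ^ 3 * (2 * u.re)) ∂μ := by
    rw [integral_add (hi 2) ((hi 3).mul_const _), integral_mul_const]; rfl
  rw [e, ← Real.norm_eq_abs]
  refine aux_close μ _ _ hI hi2 _ ?_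
  filter_upwards [hgap] with x hx
  obtain ⟨h1, h2, h3⟩ := aux_ptw a r x u hr hx hu
  rw [← Complex.normSq_inv]
  set k := ((x : ℂ) - (a + u))⁻¹
  set y := (x - a)⁻¹
  have h4 := congrArg Complex.normSq h3
  rw [Complex.normSq_mul, Complex.normSq_ofReal] at h4
  have h5 : Complex.normSq (1 - u * (y : ℂ)) = 1 - 2 * y * u.re + y ^ 2 * ‖u‖ ^ 2 := by
    rw [← Complex.normSq_eq_norm_sq, Complex.normSq_apply, Complex.normSq_apply]
    simp
    ring
  rw [h5] at h4
  have hK : Complex.normSq k ≤ (2 * r⁻¹) ^ 2 := by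
    rw [Complex.normSq_eq_norm_sq]; gcongr
  have hK0 := Complex.normSq_nonneg k
  set K := Complex.normSq k
  have e2 : K - (y ^ 2 + y ^ 3 * (2 * u.re))
      = y ^ 2 * K * (4 * u.re ^ 2 - 2 * (y * u.re) * ‖u‖ ^ 2 - ‖u‖ ^ 2) := by
    linear_combination (1 + 2 * y * u.re) * h4
  have hre := Complex.abs_re_le_norm u
  have hyu : |y * u.re| ≤ 1 / 2 := by
    rw [abs_mul]
    calc |y| * |u.re| ≤ r⁻¹ * (r / 2) := by gcongr; exact hre.trans hu
      _ = 1 / 2 := by field_simp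
  have hre2 : u.re ^ 2 ≤ ‖u‖ ^ 2 := by
    rw [← sq_abs]; gcongr
  have hb : |4 * u.re ^ 2 - 2 * (y * u.re) * ‖u‖ ^ 2 - ‖u‖ ^ 2| ≤ 6 * ‖u‖ ^ 2 := by
    have h7 := abs_le.1 hyu
    have h8 : 0 ≤ ‖u‖ ^ 2 := by positivity
    rw [abs_le]
    constructor <;> nlinarith [h7.1, h7.2, sq_nonneg u.re]
  rw [e2, Real.norm_eq_abs, abs_mul, abs_mul, abs_of_nonneg hK0, abs_pow]
  calc |y| ^ 2 * K * |4 * u.re ^ 2 - 2 * (y * u.re) * ‖u‖ ^ 2 - ‖u‖ ^ 2|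
      ≤ (r⁻¹) ^ 2 * (2 * r⁻¹) ^ 2 * (6 * ‖u‖ ^ 2) := by gcongr
    _ = _ := by ring

lemma aux_expand_I3 (μ : Measure ℝ) [IsProbabilityMeasure μ] (a r : ℝ) (hr : 0 < r)
    (hgap : ∀ᵐ x : ℝ ∂μ, r ≤ |x - a|) (u : ℝ) (hu : |u| ≤ r / 2) :
    |Inu μ (a + u) - (auxMom μ a 2 + auxMom μ a 3 * (2 * u) + auxMom μ a 4 * (3 * u ^ 2))|
      ≤ 6 * (r⁻¹) ^ 3 * (2 * r⁻¹) ^ 2 * |u| ^ 3 := by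
  have hu' : ‖(u : ℂ)‖ ≤ r / 2 := by rwa [Complex.norm_real, Real.norm_eq_abs]
  have hI := aux_int_I μ (a + u) (r / 2) (by positivity)
    (aux_gap_shift μ a u r (aux_gap_real μ a r hgap) hu')
  have hi := aux_int_mom μ a r hr hgap
  have hi2 : Integrable (fun x : ℝ => (x - a)⁻¹ ^ 2 + (x - a)⁻¹ ^ 3 * (2 * u)) μ :=
    (hi 2).add ((hi 3).mul_const _)
  have hi3 : Integrable (fun x : ℝ => (x - a)⁻¹ ^ 2 + (x - a)⁻¹ ^ 3 * (2 * u)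
      + (x - a)⁻¹ ^ 4 * (3 * u ^ 2)) μ :=
    hi2.add ((hi 4).mul_const _)
  have e : auxMom μ a 2 + auxMom μ a 3 * (2 * u) + auxMom μ a 4 * (3 * u ^ 2)
      = ∫ x : ℝ, ((x - a)⁻¹ ^ 2 + (x - a)⁻¹ ^ 3 * (2 * u) + (x - a)⁻¹ ^ 4 * (3 * u ^ 2)) ∂μ := by
    rw [integral_add hi2 ((hi 4).mul_const _), integral_add (hi 2) ((hi 3).mul_const _),
      integral_mul_const, integral_mul_const]; rfl
  rw [e, ← Real.norm_eq_abs]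
  refine aux_close μ _ _ hI hi3 _ ?_
  filter_upwards [hgap] with x hx
  obtain ⟨h1, h2, h3⟩ := aux_ptw a r x u hr hx hu'
  rw [← Complex.normSq_inv]
  set k := ((x : ℂ) - (a + u))⁻¹
  set y := (x - a)⁻¹
  have h4 := congrArg Complex.normSq h3
  rw [Complex.normSq_mul, Complex.normSq_ofReal] at h4
  have h5 : Complex.normSq (1 - u * (y : ℂ)) = (1 - u * y) ^ 2 := by
    rw [Complex.normSq_apply]
    simp
    ring
  rw [h5] at h4
  have hK : Complex.normSq k ≤ (2 * r⁻¹) ^ 2 := by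
    rw [Complex.normSq_eq_norm_sq]; gcongr
  have hK0 := Complex.normSq_nonneg k
  set K := Complex.normSq k
  have e2 : K - (y ^ 2 + y ^ 3 * (2 * u) + y ^ 4 * (3 * u ^ 2))
      = y ^ 3 * K * u ^ 3 * (4 - 3 * (y * u)) := by
    linear_combination (1 + 2 * y * u + 3 * y ^ 2 * u ^ 2) * h4
  have hyu : |y * u| ≤ 1 / 2 := by
    rw [abs_mul]
    calc |y| * |u| ≤ r⁻¹ * (r / 2) := by gcongr
      _ = 1 / 2 := by field_simp
  have hb : |4 - 3 * (y * u)| ≤ 6 := by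
    have h7 := abs_le.1 hyu
    rw [abs_le]
    constructor <;> linarith [h7.1, h7.2]
  rw [e2, Real.norm_eq_abs, abs_mul, abs_mul, abs_mul, abs_of_nonneg hK0, abs_pow, abs_pow]
  calc |y| ^ 3 * K * |u| ^ 3 * |4 - 3 * (y * u)|
      ≤ (r⁻¹) ^ 3 * (2 * r⁻¹) ^ 2 * |u| ^ 3 * 6 := by gcongr
    _ = _ := by ring

lemma aux_nondeg (μ : Measure ℝ) (d : JacobiData μ) (a r : ℝ) (hr : 0 < r)
    (hgap : ∀ᵐ x : ℝ ∂μ, r ≤ |x - a|) (ha1 : auxMom μ a 1 ≠ 0) :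
    0 < (auxMom μ a 1) ^ 2 * auxMom μ a 4 - 2 * auxMom μ a 1 * auxMom μ a 2 * auxMom μ a 3
      + (auxMom μ a 2) ^ 3 := by
  haveI := d.prob
  have hi := aux_int_mom μ a r hr hgap
  set a1 := auxMom μ a 1
  set a2 := auxMom μ a 2
  have hintg : Integrable (fun x : ℝ => a1 ^ 2 * (x - a)⁻¹ ^ 4 - 2 * a1 * a2 * (x - a)⁻¹ ^ 3
      + a2 ^ 2 * (x - a)⁻¹ ^ 2) μ :=
    (((hi 4).const_mul _).sub ((hi 3).const_mul _)).add ((hi 2).const_mul _)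
  have hintg2 : Integrable (fun x : ℝ => a1 ^ 2 * (x - a)⁻¹ ^ 4 - 2 * a1 * a2 * (x - a)⁻¹ ^ 3) μ :=
    (((hi 4).const_mul _).sub ((hi 3).const_mul _))
  have e : a1 ^ 2 * auxMom μ a 4 - 2 * a1 * a2 * auxMom μ a 3 + a2 ^ 3
      = ∫ x : ℝ, (a1 ^ 2 * (x - a)⁻¹ ^ 4 - 2 * a1 * a2 * (x - a)⁻¹ ^ 3 + a2 ^ 2 * (x - a)⁻¹ ^ 2) ∂μ := by
    rw [integral_add hintg2 ((hi 2).const_mul _),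
      integral_sub ((hi 4).const_mul _) ((hi 3).const_mul _), integral_const_mul, integral_const_mul,
      integral_const_mul]
    change _ = a1 ^ 2 * auxMom μ a 4 - 2 * a1 * a2 * auxMom μ a 3 + a2 ^ 2 * a2
    ring
  have e2 : ∀ x : ℝ, a1 ^ 2 * (x - a)⁻¹ ^ 4 - 2 * a1 * a2 * (x - a)⁻¹ ^ 3 + a2 ^ 2 * (x - a)⁻¹ ^ 2
      = ((x - a)⁻¹ * (a1 * (x - a)⁻¹ - a2)) ^ 2 := fun x => by ring
  have h0 : 0 ≤ᵐ[μ] fun x : ℝ => a1 ^ 2 * (x - a)⁻¹ ^ 4 - 2 * a1 * a2 * (x - a)⁻¹ ^ 3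
      + a2 ^ 2 * (x - a)⁻¹ ^ 2 := by
    refine Filter.Eventually.of_forall fun x => ?_
    simp only [e2]
    positivity
  rw [e]
  refine lt_of_le_of_ne (integral_nonneg_of_ae h0) fun h => ?_
  have h1 := (integral_eq_zero_iff_of_nonneg_ae h0 hintg).1 h.symm
  refine aux_jac_nondeg μ d (a + (a2 / a1)⁻¹) ?_
  filter_upwards [h1, hgap] with x hx hx'
  simp only [e2, Pi.zero_apply] at hx
  have hne : x - a ≠ 0 := by
    intro h; rw [h] at hx'; simp at hx'; linarith
  have h3 := pow_eq_zero_iff (two_ne_zero) |>.1 hx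
  rcases mul_eq_zero.1 h3 with h4 | h4
  · exact absurd h4 (inv_ne_zero hne)
  · have : (x - a)⁻¹ = a2 / a1 := by field_simp at h4 ⊢; linarith
    rw [← this, inv_inv]; ring


lemma aux_contAt (μ : Measure ℝ) [IsProbabilityMeasure μ] (w : ℂ) (r : ℝ) (hr : 0 < r)
    (hgap : ∀ᵐ x : ℝ ∂μ, r ≤ ‖(x : ℂ) - w‖) :
    ContinuousAt (mTr μ) w ∧ ContinuousAt (Inu μ) w := by
  have hnear : ∀ᶠ v in 𝓝 w, ∀ᵐ x : ℝ ∂μ, r / 2 ≤ ‖(x : ℂ) - v‖ := by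
    filter_upwards [Metric.closedBall_mem_nhds w (half_pos hr)] with v hv
    have hv' : ‖v - w‖ ≤ r / 2 := by simpa [dist_eq_norm] using hv
    have := aux_gap_shift μ w (v - w) r hgap hv'
    simpa using this
  constructor
  · unfold ContinuousAt mTr
    refine MeasureTheory.tendsto_integral_filter_of_dominated_convergence
      (fun _ => (r / 2)⁻¹) ?_ ?_ ?_ ?_
    · exact Filter.Eventually.of_forall fun v => by fun_prop
    · filter_upwards [hnear] with v hv
      filter_upwards [hv] with x hx
      rw [norm_inv]
      exact inv_anti₀ (by positivity) hx
    · exact integrable_const _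
    · filter_upwards [hgap] with x hx
      have h0 : (x : ℂ) - w ≠ 0 := norm_pos_iff.1 (hr.trans_le hx)
      have : ContinuousAt (fun v : ℂ => ((x : ℂ) - v)⁻¹) w :=
        ContinuousAt.inv₀ (by fun_prop) h0
      exact this
  · unfold ContinuousAt Inu
    refine MeasureTheory.tendsto_integral_filter_of_dominated_convergence
      (fun _ => ((r / 2) ^ 2)⁻¹) ?_ ?_ ?_ ?_
    · filter_upwards [hnear] with v hv
      exact (aux_int_I μ v (r / 2) (by positivity) hv).aestronglyMeasurable
    · filter_upwards [hnear] with v hv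
      filter_upwards [hv] with x hx
      rw [norm_inv, Complex.normSq_eq_norm_sq, norm_pow, norm_norm]
      exact inv_anti₀ (by positivity) (by gcongr)
    · exact integrable_const _
    · filter_upwards [hgap] with x hx
      have h0 : (x : ℂ) - w ≠ 0 := norm_pos_iff.1 (hr.trans_le hx)
      have : ContinuousAt (fun v : ℂ => (Complex.normSq ((x : ℂ) - v))⁻¹) w :=
        ContinuousAt.inv₀ (Complex.continuous_normSq.continuousAt.comp (by fun_prop))
          (by simpa using h0)
      exact this

lemma aux_pkg (μ : Measure ℝ) [IsProbabilityMeasure μ] (t : ℝ)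
    (ω : ℂ → ℂ) (hsub : IsSubordination μ t ω)
    (ν : Measure ℝ) (hν : IsFreePower μ t ω ν)
    (ρt : ℝ → ENNReal) (hcont : Continuous ρt)
    (hρ : ν.rnDeriv volume =ᵐ[volume] ρt) (Et r : ℝ) (hr : 0 < r)
    (hgap : ∀ᵐ x : ℝ ∂μ, r ≤ ‖(x : ℂ) - ω Et‖) :
    ∃ δ > 0, ∀ E : ℝ, |E - Et| < δ → ‖ω E - ω Et‖ ≤ r / 2 ∧
      ρt E = ENNReal.ofReal ((mTr μ (ω E)).im / Real.pi) ∧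
      ((t : ℂ) * ω E - E) * mTr μ (ω E) = -((t - 1 : ℝ) : ℂ) ∧
      (t - 1) * Inu μ (ω E) ≤ t * Complex.normSq (mTr μ (ω E)) := by
  have hc0 : ContinuousWithinAt ω {z : ℂ | 0 ≤ z.im} (Et : ℂ) := hsub.contOn _ (by simp)
  obtain ⟨δ, hδ, hδ'⟩ := Metric.continuousWithinAt_iff.1 hc0 (r / 2) (by positivity)
  have hball : ∀ z : ℂ, 0 ≤ z.im → ‖z - Et‖ < δ → ‖ω z - ω Et‖ ≤ r / 2 := by
    intro z hz hzd
    have := hδ' (x := z) hz (by simpa [dist_eq_norm] using hzd)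
    rw [dist_eq_norm] at this
    exact this.le
  have hg : ∀ z : ℂ, 0 ≤ z.im → ‖z - Et‖ < δ → ∀ᵐ x : ℝ ∂μ, r / 2 ≤ ‖(x : ℂ) - ω z‖ := by
    intro z hz hzd
    have := aux_gap_shift μ (ω Et) (ω z - ω Et) r hgap (hball z hz hzd)
    simpa using this
  haveI := hν.1
  refine ⟨δ, hδ, fun E hE => ?_⟩
  have hEn : ‖(E : ℂ) - Et‖ < δ := by
    rwa [← Complex.ofReal_sub, Complex.norm_real, Real.norm_eq_abs]
  have hEim : (0 : ℝ) ≤ ((E : ℂ)).im := by simp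
  have hgE := hg E hEim hEn
  obtain ⟨hcm, hcI⟩ := aux_contAt μ (ω E) (r / 2) (by positivity) hgE
  refine ⟨hball E hEim hEn, ?_, ?_⟩
  · refine aux_stieltjes ν Et δ (r / 2)⁻¹ (fun z => mTr μ (ω z)) ?_ ?_ ?_ ρt hcont hρ E ?_
    · rintro z ⟨hz, hzd⟩
      have h1 := (aux_contAt μ (ω z) (r / 2) (by positivity) (hg z hz hzd)).1
      have h2 : ContinuousWithinAt ω {z : ℂ | 0 ≤ z.im ∧ ‖z - Et‖ < δ} z :=
        (hsub.contOn z hz).mono fun y hy => hy.1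
      exact h1.comp_continuousWithinAt h2
    · intro z hz _
      exact (hν.2 z hz).symm
    · intro z hz hzd
      exact aux_m_norm μ (ω z) (r / 2) (by positivity) (hg z hz hzd)
    · rw [abs_lt] at hE
      constructor <;> linarith [hE.1, hE.2]
  · -- limit from the upper half plane
    have hz : Tendsto (fun η : ℝ => (E : ℂ) + η * Complex.I) (𝓝[>] 0)
        (𝓝[{z : ℂ | 0 ≤ z.im}] (E : ℂ)) := by
      refine tendsto_nhdsWithin_iff.2 ⟨?_, ?_⟩
      · have : Continuous (fun η : ℝ => (E : ℂ) + η * Complex.I) := by fun_prop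
        have := this.tendsto 0
        simp only [Complex.ofReal_zero, zero_mul, add_zero] at this
        exact this.mono_left nhdsWithin_le_nhds
      · filter_upwards [self_mem_nhdsWithin] with η hη
        have : (0 : ℝ) < η := hη
        simpa using this.le
    have hw : Tendsto (fun η : ℝ => ω ((E : ℂ) + η * Complex.I)) (𝓝[>] 0) (𝓝 (ω E)) :=
      (hsub.contOn (E : ℂ) hEim).tendsto.comp hz
    have hm := hcm.tendsto.comp hw
    have hI := hcI.tendsto.comp hw
    have hs : ∀ᶠ η : ℝ in 𝓝[>] 0, 0 < ((E : ℂ) + η * Complex.I).im := by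
      filter_upwards [self_mem_nhdsWithin] with η hη
      have : (0 : ℝ) < η := hη
      simpa using this
    constructor
    · have hl := ((hw.const_mul (t : ℂ)).sub (hz.mono_right nhdsWithin_le_nhds)).mul hm
      refine tendsto_nhds_unique (hl.congr' ?_) tendsto_const_nhds
      filter_upwards [hs] with η hη
      exact (aux_sub μ t ω hsub _ hη).2.1
    · refine le_of_tendsto_of_tendsto (hI.const_mul (t - 1))
        (((Complex.continuous_normSq.tendsto _).comp hm).const_mul t) ?_
      filter_upwards [hs] with η hη
      exact (aux_sub μ t ω hsub _ hη).2.2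

set_option maxHeartbeats 1600000 in
/-- Final local analysis: square-root behaviour from a quadratic equation. -/
lemma aux_local (A b C δ : ℝ) (hA : A ≠ 0) (hb : 0 < b) (hC : 0 < C) (hδ : 0 < δ)
    (u : ℝ → ℂ) (f : ℝ → ℝ)
    (h0 : ∀ ε > 0, ∃ d > 0, ∀ e, |e| < d → ‖u e‖ ≤ ε)
    (h1 : ∀ e : ℝ, |e| < δ → ‖(e : ℂ) - A * u e ^ 2‖ ≤ C * (‖u e‖ ^ 3 + |e| * ‖u e‖))
    (h2 : ∀ e, |e| < δ → 0 ≤ (u e).im)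
    (h3 : ∀ e, |e| < δ → |f e - b * (u e).im| ≤ C * ‖u e‖ ^ 2)
    (h4 : ∀ e, |e| < δ → 0 < (u e).im → |(u e).re| ≤ C * ‖u e‖ ^ 2)
    (h5 : ∀ e, |e| < δ → (u e).im = 0 → f e = 0) :
    ∃ S > 0, ∃ K > 0, ∃ d > 0, d ≤ δ ∧ ∀ e, |e| < d →
      (e * A < 0 → |f e - S * Real.sqrt (|e|)| ≤ K * |e|) ∧ (0 ≤ e * A → f e = 0) := by
  have hA' : 0 < |A| := abs_pos.2 hA
  set C2 : ℝ := C * (8 / |A| + 2) with hC2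
  have hC2p : 0 < C2 := by positivity
  obtain ⟨d0, hd0, hd0'⟩ := h0 (min (|A| / 2) 1 / C) (by positivity)
  set s0 : ℝ := min 1 (min (1 / (4 * C2)) (1 / (64 * C ^ 2))) with hs0
  have hs0p : 0 < s0 := by positivity
  have hs01 : s0 ≤ 1 := min_le_left _ _
  have hs02 : C2 * s0 ≤ 1 / 4 := by
    have : s0 ≤ 1 / (4 * C2) := (min_le_right _ _).trans (min_le_left _ _)
    calc C2 * s0 ≤ C2 * (1 / (4 * C2)) := by gcongr
      _ = 1 / 4 := by field_simp
  have hs03 : 16 * C ^ 2 * s0 ≤ 1 / 4 := by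
    have : s0 ≤ 1 / (64 * C ^ 2) := (min_le_right _ _).trans (min_le_right _ _)
    calc 16 * C ^ 2 * s0 ≤ 16 * C ^ 2 * (1 / (64 * C ^ 2)) := by gcongr
      _ = 1 / 4 := by field_simp; norm_num
  refine ⟨b / Real.sqrt |A|, by positivity, (4 * C + b * C2) / |A|, by positivity,
    min δ (min d0 (|A| * s0 ^ 2)), by positivity, min_le_left _ _, fun e he => ?_⟩
  have he1 : |e| < δ := he.trans_le (min_le_left _ _)
  have he2 : |e| < d0 := he.trans_le ((min_le_right _ _).trans (min_le_left _ _))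
  have he3 : |e| < |A| * s0 ^ 2 := he.trans_le ((min_le_right _ _).trans (min_le_right _ _))
  have hu := hd0' e he2
  have k1 := h1 e he1
  have k2 := h2 e he1
  have k3 := h3 e he1
  have k4 := h4 e he1
  have k5 := h5 e he1
  generalize u e = v at *
  generalize f e = y at *
  set n := ‖v‖ with hn
  have hn0 : 0 ≤ n := norm_nonneg v
  have hCn : C * n ≤ min (|A| / 2) 1 := by
    calc C * n ≤ C * (min (|A| / 2) 1 / C) := by gcongr
      _ = _ := by field_simp
  have hCn1 : C * n ≤ |A| / 2 := hCn.trans (min_le_left _ _)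
  have hCn2 : C * n ≤ 1 := hCn.trans (min_le_right _ _)
  set s := Real.sqrt (|e| / |A|) with hs
  have hsn : 0 ≤ s := Real.sqrt_nonneg _
  have hs2 : s ^ 2 = |e| / |A| := Real.sq_sqrt (by positivity)
  have hes : |e| = |A| * s ^ 2 := by rw [hs2]; field_simp
  have hss0 : s ≤ s0 := by
    have : s ^ 2 < s0 ^ 2 := by
      rw [hes] at he3
      exact lt_of_mul_lt_mul_left he3 hA'.le
    exact (abs_le_of_sq_le_sq' this.le hs0p.le).2
  have hn2s : n ≤ 2 * s := by
    have ht : |A| * n ^ 2 ≤ |e| + ‖(e : ℂ) - A * v ^ 2‖ := by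
      have := norm_sub_le (e : ℂ) ((e : ℂ) - A * v ^ 2)
      rw [sub_sub_cancel, norm_mul, norm_pow, Complex.norm_real, Complex.norm_real,
        Real.norm_eq_abs, Real.norm_eq_abs] at this
      exact this
    have e1 : C * n ^ 3 ≤ |A| / 2 * n ^ 2 := by
      calc C * n ^ 3 = (C * n) * n ^ 2 := by ring
        _ ≤ _ := by gcongr
    have e2 : C * (|e| * n) ≤ |e| := by
      calc C * (|e| * n) = |e| * (C * n) := by ring
        _ ≤ |e| * 1 := by gcongr
        _ = |e| := by ring
    have e3 : |A| * n ^ 2 ≤ |A| * (2 * s) ^ 2 := by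
      have : (2 * s) ^ 2 = 4 * s ^ 2 := by ring
      rw [this]
      nlinarith
    exact (abs_le_of_sq_le_sq' (le_of_mul_le_mul_left e3 hA') (by positivity)).2
  have hq : ‖((e / A : ℝ) : ℂ) - v ^ 2‖ ≤ C2 * s ^ 3 := by
    have hAc : (A : ℂ) ≠ 0 := by exact_mod_cast hA
    have : (e : ℂ) - A * v ^ 2 = A * (((e / A : ℝ) : ℂ) - v ^ 2) := by
      push_cast
      field_simp
    rw [this, norm_mul, Complex.norm_real, Real.norm_eq_abs] at k1
    have e1 : C * (n ^ 3 + |e| * n) ≤ |A| * (C2 * s ^ 3) := by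
      have e0 : C * (n ^ 3 + |e| * n) ≤ C * ((2 * s) ^ 3 + |e| * (2 * s)) := by gcongr
      refine e0.trans (le_of_eq ?_)
      rw [hes, hC2]
      field_simp
      ring
    exact le_of_mul_le_mul_left (k1.trans e1) hA'
  constructor
  · intro heA
    have hev : e / A = - s ^ 2 := by
      rw [hs2, ← abs_div, abs_of_neg, neg_neg]
      rw [show e / A = e * A / A ^ 2 by field_simp]
      exact div_neg_of_neg_of_pos heA (by positivity)
    have hspos : 0 < s := by
      refine lt_of_le_of_ne hsn fun h => ?_
      rw [← h] at hes
      simp at hes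
      simp [hes] at heA
    have hfac : ((e / A : ℝ) : ℂ) - v ^ 2 = -((v - s * Complex.I) * (v + s * Complex.I)) := by
      rw [hev]
      push_cast
      linear_combination (-(s : ℂ) ^ 2) * Complex.I_sq
    rw [hfac, norm_neg, norm_mul] at hq
    have g1 : s ≤ ‖v + s * Complex.I‖ := by
      have := Complex.abs_im_le_norm (v + s * Complex.I)
      simp at this
      have h' := le_abs_self (v.im + s)
      linarith
    have g2 : |v.im - s| ≤ ‖v - s * Complex.I‖ := by
      have := Complex.abs_im_le_norm (v - s * Complex.I)
      simpa using this
    have g3 : |v.im - s| ≤ C2 * s ^ 2 := by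
      have : |v.im - s| * s ≤ C2 * s ^ 2 * s := by
        calc |v.im - s| * s ≤ ‖v - s * Complex.I‖ * ‖v + s * Complex.I‖ := by gcongr
          _ ≤ _ := by rw [show C2 * s ^ 2 * s = C2 * s ^ 3 by ring]; exact hq
      exact le_of_mul_le_mul_right this hspos
    have g4 : b / Real.sqrt |A| * Real.sqrt |e| = b * s := by
      rw [hs, Real.sqrt_div (abs_nonneg e)]
      ring
    have g5 : (4 * C + b * C2) / |A| * |e| = 4 * C * s ^ 2 + b * (C2 * s ^ 2) := by
      rw [hes]; field_simp
    rw [g4, g5]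
    have g6 : y - b * s = (y - b * v.im) + b * (v.im - s) := by ring
    rw [g6]
    refine (abs_add_le _ _).trans (add_le_add ?_ ?_)
    · refine k3.trans ?_
      have : n ^ 2 ≤ (2 * s) ^ 2 := by gcongr
      nlinarith
    · rw [abs_mul, abs_of_pos hb]
      gcongr
  · intro heA
    apply k5
    by_contra hne
    have hvp : 0 < v.im := lt_of_le_of_ne k2 (Ne.symm hne)
    have hev : e / A = s ^ 2 := by
      rw [hs2, ← abs_div, abs_of_nonneg]
      rw [show e / A = e * A / A ^ 2 by field_simp]
      exact div_nonneg heA (by positivity)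
    have hspos : 0 < s := by
      have : 0 < n := by
        have := Complex.abs_im_le_norm v
        exact lt_of_lt_of_le (abs_pos.2 hne) this
      linarith
    have g1 : s ^ 2 - (v.re ^ 2 - v.im ^ 2) ≤ C2 * s ^ 3 := by
      have := (le_abs_self _).trans ((Complex.abs_re_le_norm _).trans hq)
      rw [hev] at this
      have e1 : (((s ^ 2 : ℝ) : ℂ) - v ^ 2).re = s ^ 2 - (v.re ^ 2 - v.im ^ 2) := by
        rw [Complex.sub_re, Complex.ofReal_re, sq v, Complex.mul_re]; ring
      rwa [e1] at this
    have g2 : |v.re| ≤ 4 * C * s ^ 2 := by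
      refine (k4 hvp).trans ?_
      have : n ^ 2 ≤ (2 * s) ^ 2 := by gcongr
      nlinarith
    have g3 : v.re ^ 2 ≤ (4 * C * s ^ 2) ^ 2 := by
      rw [← sq_abs]; gcongr
    have g4 : C2 * s ^ 3 ≤ 1 / 4 * s ^ 2 := by
      calc C2 * s ^ 3 = (C2 * s) * s ^ 2 := by ring
        _ ≤ (C2 * s0) * s ^ 2 := by gcongr
        _ ≤ _ := by gcongr
    have g5 : (4 * C * s ^ 2) ^ 2 ≤ 1 / 4 * s ^ 2 := by
      calc (4 * C * s ^ 2) ^ 2 = (16 * C ^ 2 * s) * s * s ^ 2 := by ring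
        _ ≤ (16 * C ^ 2 * s0) * 1 * s ^ 2 := by
            gcongr
            linarith
        _ ≤ 1 / 4 * 1 * s ^ 2 := by gcongr
        _ = _ := by ring
    nlinarith [sq_nonneg v.im, pow_pos hspos 2]

lemma aux_algA (t a1 a2 a3 c e b : ℝ) (u m : ℂ) (ht : 1 < t) (hc : 0 ≤ c)
    (hu : ‖u‖ ≤ 1) (hm2 : ‖m - (a1 + a2 * u)‖ ≤ c * ‖u‖ ^ 2)
    (hm3 : ‖m - (a1 + a2 * u + a3 * u ^ 2)‖ ≤ c * ‖u‖ ^ 3)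
    (hcrit : (t - 1) * a2 = t * a1 ^ 2) (hb : b * a1 = -(t - 1))
    (heq : ((b : ℂ) + t * u - e) * m = -((t - 1 : ℝ) : ℂ)) :
    ‖((a1 ^ 2 * e : ℝ) : ℂ) - ((t * a1 * a2 - (t - 1) * a3 : ℝ) : ℂ) * u ^ 2‖
      ≤ (t * |a1| * c + (t - 1) * c + |a1| * (|a2| + c)) * (‖u‖ ^ 3 + |e| * ‖u‖) := by
  set R2 := m - (a1 + a2 * u) with hR2
  set R3 := m - (a1 + a2 * u + a3 * u ^ 2) with hR3
  have hcrit' : ((t : ℂ) - 1) * a2 = t * (a1 : ℂ) ^ 2 := by exact_mod_cast hcrit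
  have hb' : (b : ℂ) * a1 = -((t : ℂ) - 1) := by exact_mod_cast hb
  push_cast at heq
  have hid : ((a1 ^ 2 * e : ℝ) : ℂ) - ((t * a1 * a2 - (t - 1) * a3 : ℝ) : ℂ) * u ^ 2
      = t * a1 * (u * R2) - (t - 1) * R3 - a1 * (e * (a2 * u + R2)) := by
    rw [hR2, hR3]
    push_cast
    linear_combination (-(a1 : ℂ)) * heq + m * hb' - u * hcrit'
  rw [hid]
  have n1 : ‖(t : ℂ) * a1 * (u * R2)‖ ≤ t * |a1| * (‖u‖ * (c * ‖u‖ ^ 2)) := by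
    rw [norm_mul, norm_mul, norm_mul, Complex.norm_real, Complex.norm_real, Real.norm_eq_abs,
      Real.norm_eq_abs, abs_of_pos (by linarith : 0 < t)]
    gcongr
  have n2 : ‖((t : ℂ) - 1) * R3‖ ≤ (t - 1) * (c * ‖u‖ ^ 3) := by
    have : ((t : ℂ) - 1) = ((t - 1 : ℝ) : ℂ) := by push_cast; ring
    rw [this, norm_mul, Complex.norm_real, Real.norm_eq_abs, abs_of_pos (by linarith : 0 < t - 1)]
    have : 0 ≤ t - 1 := by linarith
    gcongr
  have n3 : ‖(a2 : ℂ) * u + R2‖ ≤ (|a2| + c) * ‖u‖ := by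
    refine (norm_add_le _ _).trans ?_
    rw [norm_mul, Complex.norm_real, Real.norm_eq_abs]
    have : c * ‖u‖ ^ 2 ≤ c * ‖u‖ := by
      have : ‖u‖ ^ 2 ≤ ‖u‖ := by nlinarith [norm_nonneg u]
      gcongr
    linarith
  have n4 : ‖(a1 : ℂ) * (e * (a2 * u + R2))‖ ≤ |a1| * (|e| * ((|a2| + c) * ‖u‖)) := by
    rw [norm_mul, norm_mul, Complex.norm_real, Complex.norm_real, Real.norm_eq_abs,
      Real.norm_eq_abs]
    gcongr
  have n5 := norm_sub_le ((t : ℂ) * a1 * (u * R2) - (t - 1) * R3) (a1 * (e * (a2 * u + R2)))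
  have n6 := norm_sub_le ((t : ℂ) * a1 * (u * R2)) (((t : ℂ) - 1) * R3)
  have p1 : 0 ≤ (t * |a1| * c + (t - 1) * c) * (|e| * ‖u‖) := by
    have : 0 ≤ t - 1 := by linarith
    positivity
  have p2 : 0 ≤ |a1| * (|a2| + c) * ‖u‖ ^ 3 := by positivity
  nlinarith

lemma aux_algB (t a1 a2 a3 c c' I : ℝ) (u m : ℂ) (ht : 1 < t) (hc : 0 ≤ c)
    (hu : ‖u‖ ≤ 1) (hm2 : ‖m - (a1 + a2 * u)‖ ≤ c * ‖u‖ ^ 2)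
    (hI : |I - (a2 + a3 * (2 * u.re))| ≤ c' * ‖u‖ ^ 2)
    (hcrit : (t - 1) * a2 = t * a1 ^ 2) :
    |(t - 1) * I - t * Complex.normSq m + 2 * (t * a1 * a2 - (t - 1) * a3) * u.re|
      ≤ ((t - 1) * c' + t * (2 * |a1| * c + (|a2| + c) ^ 2)) * ‖u‖ ^ 2 := by
  set R2 := m - (a1 + a2 * u) with hR2
  have hm : m = a1 + (a2 * u + R2) := by rw [hR2]; ring
  have n3 : ‖(a2 : ℂ) * u + R2‖ ≤ (|a2| + c) * ‖u‖ := by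
    refine (norm_add_le _ _).trans ?_
    rw [norm_mul, Complex.norm_real, Real.norm_eq_abs]
    have : c * ‖u‖ ^ 2 ≤ c * ‖u‖ := by
      have : ‖u‖ ^ 2 ≤ ‖u‖ := by nlinarith [norm_nonneg u]
      gcongr
    linarith
  have hns : Complex.normSq m = a1 ^ 2 + 2 * a1 * (a2 * u.re + R2.re)
      + ‖(a2 : ℂ) * u + R2‖ ^ 2 := by
    rw [← Complex.normSq_eq_norm_sq]
    conv_lhs => rw [hm]
    simp [Complex.normSq_apply]
    ring
  have hid : (t - 1) * I - t * Complex.normSq m + 2 * (t * a1 * a2 - (t - 1) * a3) * u.re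
      = (t - 1) * (I - (a2 + a3 * (2 * u.re)))
        + (-t) * (2 * a1 * R2.re + ‖(a2 : ℂ) * u + R2‖ ^ 2) := by
    rw [hns]
    linear_combination hcrit
  have hre : |R2.re| ≤ c * ‖u‖ ^ 2 := (Complex.abs_re_le_norm _).trans hm2
  rw [hid]
  refine (abs_add_le _ _).trans ?_
  rw [abs_mul, abs_mul, abs_neg, abs_of_pos (by linarith : 0 < t),
    abs_of_pos (by linarith : 0 < t - 1)]
  have q1 : |2 * a1 * R2.re + ‖(a2 : ℂ) * u + R2‖ ^ 2|
      ≤ 2 * |a1| * (c * ‖u‖ ^ 2) + ((|a2| + c) * ‖u‖) ^ 2 := by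
    refine (abs_add_le _ _).trans (add_le_add ?_ ?_)
    · rw [abs_mul, abs_mul, abs_of_pos (by norm_num : (0:ℝ) < 2)]
      gcongr
    · rw [abs_of_nonneg (by positivity)]
      gcongr
  have q2 : (t - 1) * |I - (a2 + a3 * (2 * u.re))| ≤ (t - 1) * (c' * ‖u‖ ^ 2) := by
    have : 0 ≤ t - 1 := by linarith
    gcongr
  have q3 := mul_le_mul_of_nonneg_left q1 (by linarith : 0 ≤ t)
  calc _ ≤ (t - 1) * (c' * ‖u‖ ^ 2) + t * (2 * |a1| * (c * ‖u‖ ^ 2) + ((|a2| + c) * ‖u‖) ^ 2) :=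
        add_le_add q2 q3
    _ = _ := by ring

set_option maxHeartbeats 1600000 in
/-- Cusp exclusion: algebraic form. -/
lemma aux_algC (t a1 a2 a3 a4 c c' : ℝ) (ht : 1 < t) (ha1 : a1 ≠ 0)
    (hc : 0 ≤ c) (hc' : 0 ≤ c')
    (hcrit : (t - 1) * a2 = t * a1 ^ 2) (hN : t * a1 * a2 - (t - 1) * a3 = 0)
    (hnd : 0 < a1 ^ 2 * a4 - 2 * a1 * a2 * a3 + a2 ^ 3) :
    ∃ q > 0, ∀ (u I : ℝ) (m : ℂ), |u| ≤ q → u ≠ 0 →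
      ‖m - (a1 + a2 * u + a3 * u ^ 2)‖ ≤ c * |u| ^ 3 →
      |I - (a2 + a3 * (2 * u) + a4 * (3 * u ^ 2))| ≤ c' * |u| ^ 3 →
      t * Complex.normSq m < (t - 1) * I := by
  have ht1 : 0 < t - 1 := by linarith
  have h13 : a1 * a3 = a2 ^ 2 := by
    have : (t - 1) * (a1 * a3) = (t - 1) * a2 ^ 2 := by
      linear_combination (-a1) * hN - a2 * hcrit
    exact mul_left_cancel₀ ht1.ne' this
  set κ := 3 * (t - 1) * a4 - t * (a2 ^ 2 + 2 * a1 * a3) with hκ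
  have hκp : 0 < κ := by
    have : a1 ^ 2 * κ = 3 * (t - 1) * (a1 ^ 2 * a4 - 2 * a1 * a2 * a3 + a2 ^ 3) := by
      rw [hκ]
      linear_combination (-2 * a1 ^ 2 * t + 6 * (t - 1) * a2) * h13 + 3 * a2 ^ 2 * hcrit
    have h2 : 0 < a1 ^ 2 * κ := by rw [this]; positivity
    exact (pos_iff_pos_of_mul_pos h2).1 (by positivity)
  set P := |a1| + |a2| + |a3| with hP
  have hP0 : 0 ≤ P := by positivity
  set B := (t - 1) * c' + t * (2 * |a2| * |a3| + a3 ^ 2 + 2 * P * c + c ^ 2) + 1 with hB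
  have hBp : 0 < B := by positivity
  refine ⟨min 1 (κ / (2 * B)), by positivity, ?_⟩
  intro u I m hu hu0 hm hI
  have hu1 : |u| ≤ 1 := hu.trans (min_le_left _ _)
  have hu2 : |u| ≤ κ / (2 * B) := hu.trans (min_le_right _ _)
  set n := |u| with hn
  have hnp : 0 < n := abs_pos.2 hu0
  have hn2 : u ^ 2 = n ^ 2 := (sq_abs u).symm
  set p := a1 + a2 * u + a3 * u ^ 2 with hp
  have hpP : |p| ≤ P := by
    have e1 : |a2 * u| ≤ |a2| := by
      rw [abs_mul]; exact mul_le_of_le_one_right (abs_nonneg _) hu1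
    have e2 : |a3 * u ^ 2| ≤ |a3| := by
      rw [abs_mul, abs_pow]
      exact mul_le_of_le_one_right (abs_nonneg _) (pow_le_one₀ (abs_nonneg _) hu1)
    have := abs_add_three a1 (a2 * u) (a3 * u ^ 2)
    linarith
  have hmn : ‖m‖ ≤ |p| + c * n ^ 3 := by
    have := norm_add_le (m - (a1 + a2 * u + a3 * u ^ 2)) ((p : ℝ) : ℂ)
    rw [Complex.norm_real, Real.norm_eq_abs] at this
    have e : m - (a1 + a2 * u + a3 * u ^ 2) + ((p : ℝ) : ℂ) = m := by rw [hp]; push_cast; ring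
    rw [e] at this
    linarith
  have hns : Complex.normSq m ≤ p ^ 2 + (2 * P * c + c ^ 2) * n ^ 3 := by
    rw [Complex.normSq_eq_norm_sq]
    have h1 : ‖m‖ ^ 2 ≤ (|p| + c * n ^ 3) ^ 2 := by gcongr
    have h2 : |p| * (c * n ^ 3) ≤ P * (c * n ^ 3) := by gcongr
    have h3 : (c * n ^ 3) ^ 2 ≤ c ^ 2 * n ^ 3 := by
      have : n ^ 3 ≤ 1 := pow_le_one₀ hnp.le hu1
      calc (c * n ^ 3) ^ 2 = c ^ 2 * n ^ 3 * n ^ 3 := by ring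
        _ ≤ c ^ 2 * n ^ 3 * 1 := by gcongr
        _ = _ := by ring
    have h4 := sq_abs p
    nlinarith
  have hIl : a2 + a3 * (2 * u) + a4 * (3 * u ^ 2) - c' * n ^ 3 ≤ I := by
    have := (abs_le.1 hI).1
    linarith
  have hpe : p ^ 2 ≤ a1 ^ 2 + 2 * a1 * a2 * u + (a2 ^ 2 + 2 * a1 * a3) * u ^ 2
      + (2 * |a2| * |a3| + a3 ^ 2) * n ^ 3 := by
    have h1 : 2 * a2 * a3 * u ^ 3 ≤ 2 * |a2| * |a3| * n ^ 3 := by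
      refine (le_abs_self _).trans (le_of_eq ?_)
      rw [abs_mul, abs_mul, abs_mul, abs_pow, abs_of_pos (by norm_num : (0:ℝ) < 2)]
    have h2 : a3 ^ 2 * u ^ 4 ≤ a3 ^ 2 * n ^ 3 := by
      have : u ^ 4 ≤ n ^ 3 := by
        calc u ^ 4 = (u ^ 2) ^ 2 := by ring
          _ = n ^ 3 * n := by rw [hn2]; ring
          _ ≤ n ^ 3 * 1 := by gcongr
          _ = _ := by ring
      gcongr
    have : p ^ 2 = a1 ^ 2 + 2 * a1 * a2 * u + (a2 ^ 2 + 2 * a1 * a3) * u ^ 2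
      + 2 * a2 * a3 * u ^ 3 + a3 ^ 2 * u ^ 4 := by rw [hp]; ring
    linarith
  have hfin : B * n ^ 3 ≤ κ / 2 * n ^ 2 := by
    calc B * n ^ 3 = B * n * n ^ 2 := by ring
      _ ≤ B * (κ / (2 * B)) * n ^ 2 := by gcongr
      _ = _ := by field_simp
  have hx1 : t * Complex.normSq m ≤ t * (a1 ^ 2 + 2 * a1 * a2 * u + (a2 ^ 2 + 2 * a1 * a3) * u ^ 2
      + (2 * |a2| * |a3| + a3 ^ 2) * n ^ 3 + (2 * P * c + c ^ 2) * n ^ 3) := by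
    have : 0 ≤ t := by linarith
    gcongr
    linarith
  have hx2 : (t - 1) * (a2 + a3 * (2 * u) + a4 * (3 * u ^ 2) - c' * n ^ 3) ≤ (t - 1) * I := by
    gcongr
  have hx3 : (t - 1) * (a2 + a3 * (2 * u) + a4 * (3 * u ^ 2) - c' * n ^ 3)
      - t * (a1 ^ 2 + 2 * a1 * a2 * u + (a2 ^ 2 + 2 * a1 * a3) * u ^ 2
      + (2 * |a2| * |a3| + a3 ^ 2) * n ^ 3 + (2 * P * c + c ^ 2) * n ^ 3)
      = κ * n ^ 2 - (B - 1) * n ^ 3 := by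
    rw [← hn2, hκ, hB]
    linear_combination hcrit - 2 * u * hN
  have hx4 : 0 < κ / 2 * n ^ 2 := by positivity
  have hx5 : 0 < n ^ 3 := by positivity
  nlinarith
set_option maxHeartbeats 4000000 in
/-- Theorem 2.2, first part: square-root decay of the density `ρ_t` of
`μ^{⊞t}` at any exterior point `E_t` of `𝒱_t` such that `E_t/t` is not an atom of `μ`
of mass `≥ 1 − 1/t`. -/
theorem statement11 (μ : Measure ℝ) (d : JacobiData μ)
    (t : ℝ) (ht : 1 < t)
    (ωt : ℂ → ℂ) (hsub : IsSubordination μ t ωt)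
    (νt : Measure ℝ) (hν : IsFreePower μ t ωt νt)
    (ρt : ℝ → ENNReal) (hcont : Continuous ρt)
    (hρ : νt.rnDeriv volume =ᵐ[volume] ρt)
    (Et : ℝ)
    (hEt : Et ∈ frontier {E : ℝ | 0 < ρt E ∧ ρt E < ⊤})
    (hext : ∃ ε₀ > (0 : ℝ), ∀ ε : ℝ, 0 < ε → ε < ε₀ →
      Et - ε ∉ closure {E : ℝ | 0 < ρt E} ∨ Et + ε ∉ closure {E : ℝ | 0 < ρt E})
    (hatom : ¬ ENNReal.ofReal (1 - 1 / t) ≤ μ {Et / t}) :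
    ∃ S > (0 : ℝ), ∃ K > (0 : ℝ), ∃ δ > (0 : ℝ),
      ((∀ E ∈ Set.Ioo Et (Et + δ),
          |(ρt E).toReal - S * Real.sqrt (E - Et)| ≤ K * (E - Et)) ∧
        ∀ E ∈ Set.Ioc (Et - δ) Et, ρt E = 0) ∨
      ((∀ E ∈ Set.Ioo (Et - δ) Et,
          |(ρt E).toReal - S * Real.sqrt (Et - E)| ≤ K * (Et - E)) ∧
        ∀ E ∈ Set.Ico Et (Et + δ), ρt E = 0) := by
  haveI := d.prob
  have hpi := Real.pi_pos
  obtain ⟨r, hr, hgap⟩ := aux_gap_main μ d t ht ωt hsub Et hatom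
  obtain ⟨δ, hδ, hpk⟩ := aux_pkg μ t ωt hsub νt hν ρt hcont hρ Et r hr hgap
  have hr2 : 0 < r / 2 := by positivity
  have hg : ∀ E : ℝ, |E - Et| < δ → ∀ᵐ x : ℝ ∂μ, r / 2 ≤ ‖(x : ℂ) - ωt E‖ := by
    intro E hE
    have := aux_gap_shift μ (ωt Et) (ωt E - ωt Et) r hgap (hpk E hE).1
    simpa using this
  have him : ∀ E : ℝ, 0 ≤ (ωt E).im := fun E => hsub.mapsTo E (by simp)
  have hmI : ∀ E : ℝ, |E - Et| < δ → (mTr μ (ωt E)).im = (ωt E).im * Inu μ (ωt E) :=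
    fun E hE => aux_im_m μ (ωt E) (r / 2) hr2 (hg E hE)
  have hIp : ∀ E : ℝ, |E - Et| < δ → 0 < Inu μ (ωt E) :=
    fun E hE => aux_I_pos μ (ωt E) (r / 2) hr2 (hg E hE)
  have hmn : ∀ E : ℝ, |E - Et| < δ → 0 ≤ (mTr μ (ωt E)).im := fun E hE => by
    rw [hmI E hE]
    exact mul_nonneg (him E) (hIp E hE).le
  have hposi : ∀ E : ℝ, |E - Et| < δ → (0 < ρt E ↔ 0 < (ωt E).im) := by
    intro E hE
    rw [(hpk E hE).2.1, ENNReal.ofReal_pos, hmI E hE]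
    constructor
    · intro h
      by_contra hn
      have h0 : (ωt E).im = 0 := le_antisymm (not_lt.1 hn) (him E)
      simp [h0] at h
    · intro h
      have := hIp E hE
      positivity
  have hωc : Continuous (fun E : ℝ => ωt (E : ℂ)) :=
    hsub.contOn.comp_continuous Complex.continuous_ofReal (fun x => by simp)
  have hnear : ∀ᶠ E : ℝ in 𝓝 Et, |E - Et| < δ := by
    filter_upwards [Metric.ball_mem_nhds Et hδ] with E hE
    simpa [Real.dist_eq] using hE
  have hE0 : |Et - Et| < δ := by simpa using hδ
  -- the subordination point is real
  have hreal : (ωt Et).im = 0 := by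
    by_contra hne
    have hp : 0 < (ωt Et).im := lt_of_le_of_ne (him Et) (Ne.symm hne)
    have hev : ∀ᶠ E : ℝ in 𝓝 Et, 0 < (ωt (E : ℂ)).im :=
      ((Complex.continuous_im.comp hωc).tendsto Et).eventually (lt_mem_nhds hp)
    apply hEt.2
    rw [mem_interior_iff_mem_nhds]
    filter_upwards [hev, hnear] with E h1 h2
    refine ⟨(hposi E h2).2 h1, ?_⟩
    rw [(hpk E h2).2.1]
    exact ENNReal.ofReal_lt_top
  obtain ⟨a, ha⟩ : ∃ a : ℝ, ωt Et = (a : ℂ) := ⟨(ωt Et).re, Complex.ext (by simp) (by simpa using hreal)⟩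
  have hgap' : ∀ᵐ x : ℝ ∂μ, r ≤ |x - a| := by
    filter_upwards [hgap] with x hx
    rwa [ha, ← Complex.ofReal_sub, Complex.norm_real, Real.norm_eq_abs] at hx
  set a1 := auxMom μ a 1 with ha1
  set a2 := auxMom μ a 2 with ha2
  set a3 := auxMom μ a 3 with ha3
  set a4 := auxMom μ a 4 with ha4
  have hma : mTr μ (a : ℂ) = (a1 : ℂ) := by
    have := (aux_expand_m μ a r hr hgap' 0 (by simpa using hr2.le)).1
    simpa [sub_eq_zero] using this
  have hIa : Inu μ (a : ℂ) = a2 := by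
    have := aux_expand_I μ a r hr hgap' 0 (by simpa using hr2.le)
    simpa [sub_eq_zero] using this
  have ha2p : 0 < a2 := by
    have := hIp Et hE0
    rwa [ha, hIa] at this
  have hba : (t * a - Et) * a1 = -(t - 1) := by
    have := (hpk Et hE0).2.2.1
    rw [ha, hma] at this
    exact_mod_cast this
  have ha1n : a1 ≠ 0 := by
    intro h
    rw [h] at hba
    simp at hba
    linarith
  have hD0 : ∀ E : ℝ, |E - Et| < δ → 0 < (ωt E).im →
      (t - 1) * Inu μ (ωt E) - t * Complex.normSq (mTr μ (ωt E)) = 0 := by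
    intro E hE hp
    have := aux_alg t (ωt E) E (mTr μ (ωt E)) (Inu μ (ωt E)) (hpk E hE).2.2.1 (hmI E hE)
    simp only [Complex.ofReal_im, sub_zero] at this
    have h2 : (ωt E).im * ((t - 1) * Inu μ (ωt E) - t * Complex.normSq (mTr μ (ωt E))) = 0 := by
      linarith
    exact (mul_eq_zero.1 h2).resolve_left hp.ne'
  have hcrit : (t - 1) * a2 = t * a1 ^ 2 := by
    obtain ⟨hcm, hcI⟩ := aux_contAt μ (ωt Et) r hr hgap
    have hcD : ContinuousAt (fun E : ℝ => (t - 1) * Inu μ (ωt E)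
        - t * Complex.normSq (mTr μ (ωt E))) Et := by
      have hm := ContinuousAt.comp (f := fun E : ℝ => ωt (E : ℂ)) (x := Et) hcm hωc.continuousAt
      have hI := ContinuousAt.comp (f := fun E : ℝ => ωt (E : ℂ)) (x := Et) hcI hωc.continuousAt
      exact (hI.const_mul (t - 1)).sub ((Complex.continuous_normSq.continuousAt.comp hm).const_mul t)
    by_contra hne
    have hne' : (t - 1) * Inu μ (ωt Et) - t * Complex.normSq (mTr μ (ωt Et)) ≠ 0 := by
      rw [ha, hma, hIa, Complex.normSq_ofReal]
      intro h
      apply hne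
      linarith
    have hev := hcD.eventually_ne hne'
    have hfr := mem_closure_iff_frequently.1 hEt.1
    obtain ⟨E, h1, h2, h3⟩ := (hfr.and_eventually (hev.and hnear)).exists
    exact h2 (hD0 E h3 ((hposi E h3).1 h1.1))
  set N := t * a1 * a2 - (t - 1) * a3 with hN
  -- constants
  set c := (r⁻¹) ^ 2 * (2 * r⁻¹) + (r⁻¹) ^ 3 * (2 * r⁻¹) with hc
  have hcp : 0 < c := by positivity
  set c' := 6 * (r⁻¹) ^ 2 * (2 * r⁻¹) ^ 2 + 6 * (r⁻¹) ^ 3 * (2 * r⁻¹) ^ 2 with hc'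
  have hcp' : 0 < c' := by positivity
  set u : ℝ → ℂ := fun e => ωt ((Et + e : ℝ) : ℂ) - a with hu
  have hωu : ∀ e : ℝ, ωt ((Et + e : ℝ) : ℂ) = a + u e := fun e => by rw [hu]; ring
  have huim : ∀ e : ℝ, (u e).im = (ωt ((Et + e : ℝ) : ℂ)).im := fun e => by simp [hu]
  have h0 : ∀ ε > 0, ∃ d > 0, ∀ e, |e| < d → ‖u e‖ ≤ ε := by
    intro ε hε
    obtain ⟨d', hd', hdd⟩ := Metric.continuousAt_iff.1 (hωc.continuousAt (x := Et)) ε hε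
    refine ⟨d', hd', fun e he => ?_⟩
    have := hdd (x := Et + e) (by simpa [Real.dist_eq] using he)
    rw [ha, dist_eq_norm] at this
    exact this.le
  obtain ⟨d1, hd1, hu1⟩ := h0 1 one_pos
  have hnr : ∀ e : ℝ, |e| < δ → |Et + e - Et| < δ := fun e he => by simpa using he
  have hur : ∀ e : ℝ, |e| < δ → ‖u e‖ ≤ r / 2 := fun e he => by
    have := (hpk (Et + e) (hnr e he)).1
    rwa [ha] at this
  have hm2 : ∀ e : ℝ, |e| < δ → ‖mTr μ (a + u e) - (a1 + a2 * u e)‖ ≤ c * ‖u e‖ ^ 2 :=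
    fun e he => (aux_expand_m μ a r hr hgap' (u e) (hur e he)).1.trans
      (mul_le_mul_of_nonneg_right (by rw [hc]; exact le_add_of_nonneg_right (by positivity)) (by positivity))
  have hm3 : ∀ e : ℝ, |e| < δ → ‖mTr μ (a + u e) - (a1 + a2 * u e + a3 * u e ^ 2)‖ ≤ c * ‖u e‖ ^ 3 :=
    fun e he => (aux_expand_m μ a r hr hgap' (u e) (hur e he)).2.trans
      (mul_le_mul_of_nonneg_right (by rw [hc]; exact le_add_of_nonneg_left (by positivity)) (by positivity))
  have hI2 : ∀ e : ℝ, |e| < δ → |Inu μ (a + u e) - (a2 + a3 * (2 * (u e).re))| ≤ c' * ‖u e‖ ^ 2 :=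
    fun e he => (aux_expand_I μ a r hr hgap' (u e) (hur e he)).trans
      (mul_le_mul_of_nonneg_right (by rw [hc']; exact le_add_of_nonneg_right (by positivity)) (by positivity))
  have hsubE : ∀ e : ℝ, |e| < δ →
      (((t * a - Et : ℝ) : ℂ) + t * u e - e) * mTr μ (a + u e) = -((t - 1 : ℝ) : ℂ) := by
    intro e he
    have := (hpk (Et + e) (hnr e he)).2.2.1
    rw [hωu] at this
    rw [← this]
    push_cast
    ring
  set C1 := t * |a1| * c + (t - 1) * c + |a1| * (|a2| + c) with hC1
  have ht1 : 0 < t - 1 := by linarith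
  have hC1p : 0 < C1 := by positivity
  have hq1 : ∀ e : ℝ, |e| < min δ d1 →
      ‖((a1 ^ 2 * e : ℝ) : ℂ) - (N : ℂ) * u e ^ 2‖ ≤ C1 * (‖u e‖ ^ 3 + |e| * ‖u e‖) := by
    intro e he
    have he1 := he.trans_le (min_le_left _ _)
    exact aux_algA t a1 a2 a3 c e (t * a - Et) (u e) _ ht hcp.le
      (hu1 e (he.trans_le (min_le_right _ _))) (hm2 e he1) (hm3 e he1) hcrit hba (hsubE e he1)
  have hNne : N ≠ 0 := by
    intro hN0
    obtain ⟨q, hq, hcusp⟩ := aux_algC t a1 a2 a3 a4 c c' ht ha1n hcp.le hcp'.le hcrit hN0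
      (aux_nondeg μ d a r hr hgap' ha1n)
    obtain ⟨d2, hd2, hu2⟩ := h0 q hq
    have hall : ∀ e : ℝ, |e| < min (min δ d1) d2 → e ≠ 0 → 0 < ρt (Et + e) := by
      intro e he hene
      have he12 := he.trans_le (min_le_left _ _)
      have he1 := he12.trans_le (min_le_left _ _)
      rw [hposi _ (hnr e he1), ← huim]
      by_contra hn
      have hu0 : (u e).im = 0 := le_antisymm (not_lt.1 hn) (by rw [huim]; exact him _)
      obtain ⟨v, hv⟩ : ∃ v : ℝ, u e = (v : ℂ) := ⟨(u e).re, Complex.ext (by simp) (by simpa using hu0)⟩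
      have hvn : v ≠ 0 := by
        intro hv0
        have := hq1 e he12
        rw [hv, hv0] at this
        have e0 : ((a1 ^ 2 * e : ℝ) : ℂ) - (N : ℂ) * ((0 : ℝ) : ℂ) ^ 2 = ((a1 ^ 2 * e : ℝ) : ℂ) := by
          push_cast
          ring
        rw [e0, Complex.norm_real (a1 ^ 2 * e), Real.norm_eq_abs] at this
        have h9 := abs_nonpos_iff.1 (this.trans_eq (by simp))
        exact mul_ne_zero (pow_ne_zero 2 ha1n) hene h9
      have hnv : ‖u e‖ = |v| := by rw [hv, Complex.norm_real, Real.norm_eq_abs]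
      have k1 := hm3 e he1
      have k0 := hur e he1
      have k2 := (hpk (Et + e) (hnr e he1)).2.2.2
      have k4 := hu2 e (he.trans_le (min_le_right _ _))
      rw [hωu] at k2
      rw [hnv] at k0 k4 k1
      rw [hv] at k1 k2
      have k3 := (aux_expand_I3 μ a r hr hgap' v k0).trans
        (mul_le_mul_of_nonneg_right (b := 6 * (r⁻¹) ^ 3 * (2 * r⁻¹) ^ 2) (c := c')
          (by rw [hc']; exact le_add_of_nonneg_left (by positivity)) (by positivity))
      have := hcusp v (Inu μ (a + v)) (mTr μ (a + v)) k4 hvn k1 k3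
      linarith
    obtain ⟨ε₀, hε₀, hx⟩ := hext
    set D := min (min δ d1) d2 with hDD
    have hDp : 0 < D := by positivity
    have hmp : 0 < min ε₀ D := by positivity
    have hlt1 : min ε₀ D / 2 < ε₀ := by linarith [min_le_left ε₀ D]
    have hlt2 : min ε₀ D / 2 < D := by linarith [min_le_right ε₀ D]
    rcases hx (min ε₀ D / 2) (by positivity) hlt1 with h | h
    · apply h
      apply subset_closure
      have := hall (-(min ε₀ D / 2)) (by rwa [abs_neg, abs_of_pos (by positivity)])
        (by have : 0 < min ε₀ D / 2 := by positivity
            linarith)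
      rwa [← sub_eq_add_neg] at this
    · apply h
      apply subset_closure
      exact hall (min ε₀ D / 2) (by rwa [abs_of_pos (by positivity)]) (by positivity)
  set C2 := (t - 1) * c' + t * (2 * |a1| * c + (|a2| + c) ^ 2) with hC2
  have hC2p : 0 < C2 := by positivity
  have hNp : 0 < |N| := abs_pos.2 hNne
  have ha12 : 0 < a1 ^ 2 := by positivity
  set A := N / a1 ^ 2 with hA
  set C := C1 / a1 ^ 2 + C2 / (2 * |N|) + c / Real.pi with hCdef
  have hA1 : C1 / a1 ^ 2 ≤ C := by
    have : 0 ≤ C2 / (2 * |N|) + c / Real.pi := by positivity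
    rw [hCdef]; linarith
  have hA2 : C2 / (2 * |N|) ≤ C := by
    have : 0 ≤ C1 / a1 ^ 2 + c / Real.pi := by positivity
    rw [hCdef]; linarith
  have hA3 : c / Real.pi ≤ C := by
    have : 0 ≤ C1 / a1 ^ 2 + C2 / (2 * |N|) := by positivity
    rw [hCdef]; linarith
  have hAne : A ≠ 0 := div_ne_zero hNne ha12.ne'
  obtain ⟨S, hS, K, hK, dd, hdd, hdδ, hfin⟩ := aux_local A (a2 / Real.pi) C (min δ d1) hAne
    (by positivity) (by positivity) (by positivity) u
    (fun e => (mTr μ (a + u e)).im / Real.pi) h0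
    (by
      intro e he
      have := hq1 e he
      have hid : ((a1 ^ 2 * e : ℝ) : ℂ) - (N : ℂ) * u e ^ 2
          = ((a1 ^ 2 : ℝ) : ℂ) * ((e : ℂ) - A * u e ^ 2) := by
        have hac : (a1 : ℂ) ≠ 0 := by exact_mod_cast ha1n
        rw [hA]
        push_cast
        field_simp
      rw [hid, norm_mul, Complex.norm_real, Real.norm_eq_abs, abs_of_pos ha12] at this
      calc ‖(e : ℂ) - A * u e ^ 2‖ ≤ C1 * (‖u e‖ ^ 3 + |e| * ‖u e‖) / a1 ^ 2 := by
            rw [le_div_iff₀ ha12]; linarith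
        _ = C1 / a1 ^ 2 * (‖u e‖ ^ 3 + |e| * ‖u e‖) := by ring
        _ ≤ _ := by gcongr)
    (by
      intro e he
      rw [huim]
      exact him _)
    (by
      intro e he
      have he1 := he.trans_le (min_le_left _ _)
      have k := (Complex.abs_im_le_norm _).trans (hm2 e he1)
      have e1 : (mTr μ (a + u e) - (a1 + a2 * u e)).im = (mTr μ (a + u e)).im - a2 * (u e).im := by
        simp
      rw [e1] at k
      have e2 : (mTr μ (a + u e)).im / Real.pi - a2 / Real.pi * (u e).im
          = ((mTr μ (a + u e)).im - a2 * (u e).im) / Real.pi := by ring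
      simp only [e2]
      rw [abs_div, abs_of_pos hpi]
      calc _ ≤ c * ‖u e‖ ^ 2 / Real.pi := by gcongr
        _ = c / Real.pi * ‖u e‖ ^ 2 := by ring
        _ ≤ _ := by gcongr)
    (by
      intro e he hp
      have he1 := he.trans_le (min_le_left _ _)
      have k := aux_algB t a1 a2 a3 c c' (Inu μ (a + u e)) (u e) (mTr μ (a + u e)) ht hcp.le
        (hu1 e (he.trans_le (min_le_right _ _))) (hm2 e he1) (hI2 e he1) hcrit
      rw [huim] at hp
      have k0 := hD0 (Et + e) (hnr e he1) hp
      rw [hωu] at k0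
      rw [k0, zero_add, abs_mul, abs_mul, abs_of_pos (by norm_num : (0:ℝ) < 2)] at k
      calc |(u e).re| ≤ C2 * ‖u e‖ ^ 2 / (2 * |N|) := by
            rw [le_div_iff₀ (by positivity)]; linarith
        _ = C2 / (2 * |N|) * ‖u e‖ ^ 2 := by ring
        _ ≤ _ := by gcongr)
    (by
      intro e he h
      have he1 := he.trans_le (min_le_left _ _)
      have := hmI (Et + e) (hnr e he1)
      rw [← huim, h, hωu, zero_mul] at this
      simp [this])
  have hρe : ∀ E : ℝ, |E - Et| < dd → ρt E = ENNReal.ofReal ((mTr μ (a + u (E - Et))).im / Real.pi)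
      ∧ (ρt E).toReal = (mTr μ (a + u (E - Et))).im / Real.pi := by
    intro E hE
    have hE1 : |E - Et| < δ := hE.trans_le (hdδ.trans (min_le_left _ _))
    have h1 := (hpk E hE1).2.1
    have h2 := hmn E hE1
    have h3 := hωu (E - Et)
    rw [add_sub_cancel] at h3
    rw [h3] at h1 h2
    refine ⟨h1, ?_⟩
    rw [h1, ENNReal.toReal_ofReal (by positivity)]
  refine ⟨S, hS, K, hK, dd, hdd, ?_⟩
  rcases lt_or_gt_of_ne hAne with hAs | hAs
  · left
    constructor
    · intro E hE
      have hp : 0 < E - Et := by linarith [hE.1]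
      have hab : |E - Et| < dd := by rw [abs_of_pos hp]; linarith [hE.2]
      have := (hfin (E - Et) hab).1 (mul_neg_of_pos_of_neg hp hAs)
      rw [abs_of_pos hp] at this
      rw [(hρe E hab).2]
      exact this
    · intro E hE
      have hp : E - Et ≤ 0 := by linarith [hE.2]
      have hab : |E - Et| < dd := by rw [abs_of_nonpos hp]; linarith [hE.1]
      have := (hfin (E - Et) hab).2 (mul_nonneg_of_nonpos_of_nonpos hp hAs.le)
      rw [(hρe E hab).1]
      rw [this, ENNReal.ofReal_zero]
  · right
    constructor
    · intro E hE
      have hp : E - Et < 0 := by linarith [hE.2]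
      have hab : |E - Et| < dd := by rw [abs_of_neg hp]; linarith [hE.1]
      have := (hfin (E - Et) hab).1 (mul_neg_of_neg_of_pos hp hAs)
      rw [abs_of_neg hp, neg_sub] at this
      rw [(hρe E hab).2]
      exact this
    · intro E hE
      have hp : 0 ≤ E - Et := by linarith [hE.1]
      have hab : |E - Et| < dd := by rw [abs_of_nonneg hp]; linarith [hE.2]
      have := (hfin (E - Et) hab).2 (mul_nonneg hp hAs.le)
      rw [(hρe E hab).1]
      rw [this, ENNReal.ofReal_zero]


end
end
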